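/- arXiv:math/0208139 — 9 statements merged into one kernel-verified Lean document; each statement's English description precedes it below -/
import Mathlib

section
/- If Re(s) ≥ 0, then Re(s)·‖w‖² + (1/R)·‖Dw‖² ≤ ‖w‖² + ‖w‖·‖H‖. -/
open MeasureTheory Complex

noncomputable section

/-- Partial derivative in the first (x) variable. -/
def pdx (f : ℝ → ℝ → ℂ) : ℝ → ℝ → ℂ := fun x y => deriv (fun x' => f x' y) x

/-- Partial derivative in the second (y) variable. -/
def pdy (f : ℝ → ℝ → ℂ) : ℝ → ℝ → ℂ := fun x y => deriv (fun y' => f x y') y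

/-- Laplacian in the space variables. -/
def lap (f : ℝ → ℝ → ℂ) : ℝ → ℝ → ℂ := fun x y => pdx (pdx f) x y + pdy (pdy f) x y

/-- Square of the L² norm over Ω = [0,1] × [0,1]. -/
def nsq (f : ℝ → ℝ → ℂ) : ℝ := ∫ x in (0:ℝ)..(1:ℝ), ∫ y in (0:ℝ)..(1:ℝ), ‖f x y‖ ^ 2

/-- Smoothness of a function of two real variables. -/
def SmoothFn (f : ℝ → ℝ → ℂ) : Prop := ContDiff ℝ (⊤ : ℕ∞) (fun q : ℝ × ℝ => f q.1 q.2)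

/-- 1-periodicity in the first variable. -/
def PeriodicX (f : ℝ → ℝ → ℂ) : Prop := ∀ x y, f (x + 1) y = f x y

lemma SmoothFn.hx {f : ℝ → ℝ → ℂ} (hf : SmoothFn f) (x y : ℝ) :
    HasDerivAt (fun x' => f x' y) (pdx f x y) x := by
  have h1 : ContDiff ℝ (⊤ : ℕ∞) (fun x' : ℝ => f x' y) :=
    ContDiff.comp (g := fun q : ℝ × ℝ => f q.1 q.2) hf (contDiff_id.prodMk contDiff_const)
  exact ((h1.differentiable (by simp)) x).hasDerivAt

lemma SmoothFn.hy {f : ℝ → ℝ → ℂ} (hf : SmoothFn f) (x y : ℝ) :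
    HasDerivAt (fun y' => f x y') (pdy f x y) y := by
  have h1 : ContDiff ℝ (⊤ : ℕ∞) (fun y' : ℝ => f x y') :=
    ContDiff.comp (g := fun q : ℝ × ℝ => f q.1 q.2) hf (contDiff_const.prodMk contDiff_id)
  exact ((h1.differentiable (by simp)) y).hasDerivAt

lemma SmoothFn.px {f : ℝ → ℝ → ℂ} (hf : SmoothFn f) : SmoothFn (pdx f) := by
  have h1 : ContDiff ℝ (⊤ : ℕ∞)
      (fun q : ℝ × ℝ => fderiv ℝ (fun q : ℝ × ℝ => f q.1 q.2) q ((1 : ℝ), (0 : ℝ))) :=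
    (ContDiff.fderiv_right (m := (⊤ : ℕ∞)) hf (by simp)).clm_apply contDiff_const
  have h2 : (fun q : ℝ × ℝ => pdx f q.1 q.2)
      = fun q : ℝ × ℝ => fderiv ℝ (fun q : ℝ × ℝ => f q.1 q.2) q ((1 : ℝ), (0 : ℝ)) := by
    funext q
    have hd : HasFDerivAt (fun q : ℝ × ℝ => f q.1 q.2) _ (q.1, q.2) :=
      ((ContDiff.differentiable hf (by simp)) q).hasFDerivAt
    have hl : HasDerivAt (fun x : ℝ => (x, q.2)) ((1 : ℝ), (0 : ℝ)) q.1 :=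
      (hasDerivAt_id _).prodMk (hasDerivAt_const _ _)
    exact (hd.comp_hasDerivAt q.1 hl).deriv
  unfold SmoothFn
  rw [h2]; exact h1

lemma SmoothFn.py {f : ℝ → ℝ → ℂ} (hf : SmoothFn f) : SmoothFn (pdy f) := by
  have h1 : ContDiff ℝ (⊤ : ℕ∞)
      (fun q : ℝ × ℝ => fderiv ℝ (fun q : ℝ × ℝ => f q.1 q.2) q ((0 : ℝ), (1 : ℝ))) :=
    (ContDiff.fderiv_right (m := (⊤ : ℕ∞)) hf (by simp)).clm_apply contDiff_const
  have h2 : (fun q : ℝ × ℝ => pdy f q.1 q.2)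
      = fun q : ℝ × ℝ => fderiv ℝ (fun q : ℝ × ℝ => f q.1 q.2) q ((0 : ℝ), (1 : ℝ)) := by
    funext q
    have hd : HasFDerivAt (fun q : ℝ × ℝ => f q.1 q.2) _ (q.1, q.2) :=
      ((ContDiff.differentiable hf (by simp)) q).hasFDerivAt
    have hl : HasDerivAt (fun y : ℝ => (q.1, y)) ((0 : ℝ), (1 : ℝ)) q.2 :=
      (hasDerivAt_const _ _).prodMk (hasDerivAt_id _)
    exact (hd.comp_hasDerivAt q.2 hl).deriv
  unfold SmoothFn
  rw [h2]; exact h1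

lemma PeriodicX.px {f : ℝ → ℝ → ℂ} (hf : PeriodicX f) : PeriodicX (pdx f) := by
  intro x y
  unfold pdx
  rw [← deriv_comp_add_const]
  congr 1
  funext x'
  exact hf x' y

lemma SmoothFn.mul' {f g : ℝ → ℝ → ℂ} (hf : SmoothFn f) (hg : SmoothFn g) :
    SmoothFn (fun x y => f x y * g x y) := ContDiff.mul hf hg
lemma SmoothFn.add' {f g : ℝ → ℝ → ℂ} (hf : SmoothFn f) (hg : SmoothFn g) :
    SmoothFn (fun x y => f x y + g x y) := ContDiff.add hf hg
lemma SmoothFn.sub' {f g : ℝ → ℝ → ℂ} (hf : SmoothFn f) (hg : SmoothFn g) :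
    SmoothFn (fun x y => f x y - g x y) := ContDiff.sub hf hg
lemma SmoothFn.const' (c : ℂ) : SmoothFn (fun _ _ => c) := contDiff_const
lemma SmoothFn.y' : SmoothFn (fun _ y => (y : ℂ)) :=
  Complex.ofRealCLM.contDiff.comp contDiff_snd
lemma SmoothFn.conj' {f : ℝ → ℝ → ℂ} (hf : SmoothFn f) :
    SmoothFn (fun x y => star (f x y)) :=
  ContDiff.comp (g := fun z : ℂ => star z) Complex.conjCLE.contDiff hf

/-- Iterated integral over the unit square. -/
def JJ (f : ℝ → ℝ → ℝ) : ℝ := ∫ x in (0:ℝ)..(1:ℝ), ∫ y in (0:ℝ)..(1:ℝ), f x y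

def C2 (f : ℝ → ℝ → ℝ) : Prop := Continuous (fun q : ℝ × ℝ => f q.1 q.2)

lemma C2.inner {f : ℝ → ℝ → ℝ} (hf : C2 f) (x : ℝ) :
    IntervalIntegrable (fun y => f x y) volume 0 1 :=
  (Continuous.comp (g := fun q : ℝ × ℝ => f q.1 q.2) hf
    (continuous_const.prodMk continuous_id)).intervalIntegrable _ _

lemma C2.outer {f : ℝ → ℝ → ℝ} (hf : C2 f) :
    IntervalIntegrable (fun x => ∫ y in (0:ℝ)..(1:ℝ), f x y) volume 0 1 :=
  (intervalIntegral.continuous_parametric_intervalIntegral_of_continuous'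
    (f := f) hf 0 1).intervalIntegrable _ _

lemma JJ_add {f g : ℝ → ℝ → ℝ} (hf : C2 f) (hg : C2 g) :
    JJ (fun x y => f x y + g x y) = JJ f + JJ g := by
  unfold JJ
  rw [← intervalIntegral.integral_add hf.outer hg.outer]
  congr 1; funext x
  exact intervalIntegral.integral_add (hf.inner x) (hg.inner x)

lemma JJ_mul (c : ℝ) (f : ℝ → ℝ → ℝ) :
    JJ (fun x y => c * f x y) = c * JJ f := by
  simp [JJ]

lemma JJ_mono {f g : ℝ → ℝ → ℝ} (hf : C2 f) (hg : C2 g)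
    (h : ∀ x ∈ Set.Icc (0:ℝ) 1, ∀ y ∈ Set.Icc (0:ℝ) 1, f x y ≤ g x y) : JJ f ≤ JJ g := by
  unfold JJ
  refine intervalIntegral.integral_mono_on zero_le_one hf.outer hg.outer fun x hx => ?_
  exact intervalIntegral.integral_mono_on zero_le_one (hf.inner x) (hg.inner x) (h x hx)

lemma C2.add {f g : ℝ → ℝ → ℝ} (hf : C2 f) (hg : C2 g) : C2 (fun x y => f x y + g x y) :=
  Continuous.add hf hg
lemma C2.cmul {f : ℝ → ℝ → ℝ} (c : ℝ) (hf : C2 f) : C2 (fun x y => c * f x y) :=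
  Continuous.mul continuous_const hf
lemma SmoothFn.c2n {f : ℝ → ℝ → ℂ} (hf : SmoothFn f) : C2 (fun x y => ‖f x y‖ ^ 2) :=
  (ContDiff.continuous hf).norm.pow 2
lemma SmoothFn.c2r {f : ℝ → ℝ → ℂ} (hf : SmoothFn f) : C2 (fun x y => (f x y).re) :=
  Complex.continuous_re.comp (ContDiff.continuous hf)

lemma hasDerivAt_re' {f : ℝ → ℂ} {f' : ℂ} {x : ℝ} (h : HasDerivAt f f' x) :
    HasDerivAt (fun x => (f x).re) f'.re x :=
  Complex.reCLM.hasFDerivAt.comp_hasDerivAt x h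

lemma JJ_pdy {B : ℝ → ℝ → ℂ} (hB : SmoothFn B) (h0 : ∀ x, B x 0 = 0) (h1 : ∀ x, B x 1 = 0) :
    JJ (fun x y => (pdy B x y).re) = 0 := by
  unfold JJ
  have : ∀ x, ∫ y in (0:ℝ)..(1:ℝ), (pdy B x y).re = 0 := by
    intro x
    rw [intervalIntegral.integral_eq_sub_of_hasDerivAt (f := fun y => (B x y).re)
      (fun y _ => hasDerivAt_re' (hB.hy x y)) (hB.py.c2r.inner x)]
    simp [h0, h1]
  simp [this]

lemma JJ_pdx {A : ℝ → ℝ → ℂ} (hA : SmoothFn A) (hp : PeriodicX A) :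
    JJ (fun x y => (pdx A x y).re) = 0 := by
  unfold JJ
  rw [intervalIntegral_intervalIntegral_swap]
  · have : ∀ y, ∫ x in (0:ℝ)..(1:ℝ), (pdx A x y).re = 0 := by
      intro y
      rw [intervalIntegral.integral_eq_sub_of_hasDerivAt (f := fun x => (A x y).re)
        (fun x _ => hasDerivAt_re' (hA.hx x y))]
      · have := hp 0 y
        simp at this
        simp [this]
      · exact (Continuous.comp (g := fun q : ℝ × ℝ => (pdx A q.1 q.2).re) hA.px.c2r
          (continuous_id.prodMk continuous_const)).intervalIntegrable _ _
    simp [this]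
  · have hc : Continuous (Function.uncurry fun x y => (pdx A x y).re) := hA.px.c2r
    refine (hc.continuousOn.integrableOn_compact
      (isCompact_uIcc.prod isCompact_uIcc) (K := Set.uIcc (0:ℝ) 1 ×ˢ Set.uIcc (0:ℝ) 1)).mono_set ?_
    exact Set.prod_mono Set.uIoc_subset_uIcc Set.uIoc_subset_uIcc

lemma le_sqrt_mul_of_forall {I a b : ℝ} (ha : 0 ≤ a) (hb : 0 ≤ b)
    (h : ∀ t : ℝ, 0 < t → I ≤ t / 2 * a + 1 / (2 * t) * b) :
    I ≤ Real.sqrt a * Real.sqrt b := by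
  refine le_of_forall_pos_le_add fun ε hε => ?_
  obtain ⟨δ, hδ, hδε⟩ : ∃ δ : ℝ, 0 < δ ∧ δ * (√a + √b) ≤ ε := by
    refine ⟨ε / (√a + √b + 1), by positivity, ?_⟩
    rw [div_mul_eq_mul_div, div_le_iff₀ (by positivity)]
    nlinarith
  have hA := Real.sqrt_nonneg a
  have hB := Real.sqrt_nonneg b
  have h1 := h ((√b + δ) / (√a + δ)) (by positivity)
  have e1 : (√b + δ) / (√a + δ) / 2 * a ≤ (√b + δ) * √a / 2 := by
    rw [div_div, div_mul_eq_mul_div, div_le_iff₀ (by positivity)]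
    have := Real.sq_sqrt ha
    have h3 : 0 ≤ (√b + δ) * √a * δ := by positivity
    nlinarith
  have e2 : 1 / (2 * ((√b + δ) / (√a + δ))) * b ≤ (√a + δ) * √b / 2 := by
    have : 1 / (2 * ((√b + δ) / (√a + δ))) * b = (√a + δ) * b / (2 * (√b + δ)) := by
      field_simp
    rw [this, div_le_iff₀ (by positivity)]
    have := Real.sq_sqrt hb
    have h3 : 0 ≤ (√a + δ) * √b * δ := by positivity
    nlinarith
  nlinarith

lemma JJ_nonneg_nsq (f : ℝ → ℝ → ℂ) : 0 ≤ nsq f := by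
  unfold nsq
  refine intervalIntegral.integral_nonneg zero_le_one fun x _ => ?_
  exact intervalIntegral.integral_nonneg zero_le_one fun y _ => by positivity

/-- x-flux -/
def fluxA (r : ℝ) (u v p : ℝ → ℝ → ℂ) : ℝ → ℝ → ℂ := fun x y =>
  (r : ℂ) * (star (u x y) * pdx u x y + star (v x y) * pdx v x y)
    - (1 / 2 : ℂ) * ((y : ℂ) * (star (u x y) * u x y + star (v x y) * v x y))
    - star (u x y) * p x y

/-- y-flux -/
def fluxB (r : ℝ) (u v p : ℝ → ℝ → ℂ) : ℝ → ℝ → ℂ := fun x y =>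
  (r : ℂ) * (star (u x y) * pdy u x y + star (v x y) * pdy v x y)
    - star (v x y) * p x y

lemma fluxA_smooth (r : ℝ) {u v p : ℝ → ℝ → ℂ} (hu : SmoothFn u) (hv : SmoothFn v)
    (hp : SmoothFn p) : SmoothFn (fluxA r u v p) :=
  (((SmoothFn.const' _).mul' ((hu.conj'.mul' hu.px).add' (hv.conj'.mul' hv.px))).sub'
    ((SmoothFn.const' _).mul' (SmoothFn.y'.mul' ((hu.conj'.mul' hu).add' (hv.conj'.mul' hv))))).sub'
    (hu.conj'.mul' hp)

lemma fluxB_smooth (r : ℝ) {u v p : ℝ → ℝ → ℂ} (hu : SmoothFn u) (hv : SmoothFn v)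
    (hp : SmoothFn p) : SmoothFn (fluxB r u v p) :=
  ((SmoothFn.const' _).mul' ((hu.conj'.mul' hu.py).add' (hv.conj'.mul' hv.py))).sub'
    (hv.conj'.mul' hp)

lemma pdx_fluxA (r : ℝ) {u v p : ℝ → ℝ → ℂ} (hu : SmoothFn u) (hv : SmoothFn v)
    (hp : SmoothFn p) (x y : ℝ) : pdx (fluxA r u v p) x y =
    (r : ℂ) * ((star (pdx u x y) * pdx u x y + star (u x y) * pdx (pdx u) x y)
      + (star (pdx v x y) * pdx v x y + star (v x y) * pdx (pdx v) x y))
    - (1 / 2 : ℂ) * ((y : ℂ) * ((star (pdx u x y) * u x y + star (u x y) * pdx u x y)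
      + (star (pdx v x y) * v x y + star (v x y) * pdx v x y)))
    - (star (pdx u x y) * p x y + star (u x y) * pdx p x y) :=
  ((((((hu.hx x y).star.mul (hu.px.hx x y)).add
    ((hv.hx x y).star.mul (hv.px.hx x y))).const_mul (r : ℂ)).sub
    (((((hu.hx x y).star.mul (hu.hx x y)).add
      ((hv.hx x y).star.mul (hv.hx x y))).const_mul (y : ℂ)).const_mul (1 / 2 : ℂ))).sub
    ((hu.hx x y).star.mul (hp.hx x y))).deriv

lemma pdy_fluxB (r : ℝ) {u v p : ℝ → ℝ → ℂ} (hu : SmoothFn u) (hv : SmoothFn v)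
    (hp : SmoothFn p) (x y : ℝ) : pdy (fluxB r u v p) x y =
    (r : ℂ) * ((star (pdy u x y) * pdy u x y + star (u x y) * pdy (pdy u) x y)
      + (star (pdy v x y) * pdy v x y + star (v x y) * pdy (pdy v) x y))
    - (star (pdy v x y) * p x y + star (v x y) * pdy p x y) :=
  (((((hu.hy x y).star.mul (hu.py.hy x y)).add
    ((hv.hy x y).star.mul (hv.py.hy x y))).const_mul (r : ℂ)).sub
    ((hv.hy x y).star.mul (hp.hy x y))).deriv

/-- Pointwise energy identity. -/
lemma pointwise_identity (r y : ℝ) (s u v p ux uy vx vy px py uxx uyy vxx vyy F G : ℂ)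
    (hdiv : ux + vy = 0)
    (h1 : s * u + (y:ℂ) * ux + v + px = (r:ℂ) * (uxx + uyy) + F)
    (h2 : s * v + (y:ℂ) * vx + py = (r:ℂ) * (vxx + vyy) + G) :
    s.re * (‖u‖ ^ 2 + ‖v‖ ^ 2) + r * (‖ux‖ ^ 2 + ‖uy‖ ^ 2 + ‖vx‖ ^ 2 + ‖vy‖ ^ 2)
     = -(u.re * v.re + u.im * v.im) + (u.re * F.re + u.im * F.im + v.re * G.re + v.im * G.im)
      + ((r : ℂ) * ((star ux * ux + star u * uxx) + (star vx * vx + star v * vxx))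
        - (1 / 2 : ℂ) * ((y : ℂ) * ((star ux * u + star u * ux) + (star vx * v + star v * vx)))
        - (star ux * p + star u * px)).re
      + ((r : ℂ) * ((star uy * uy + star u * uyy) + (star vy * vy + star v * vyy))
        - (star vy * p + star v * py)).re := by
  have e1 := congrArg Complex.re h1
  have e2 := congrArg Complex.im h1
  have e3 := congrArg Complex.re h2
  have e4 := congrArg Complex.im h2
  have e5 := congrArg Complex.re hdiv
  have e6 := congrArg Complex.im hdiv
  have hh : (1 / 2 : ℂ) = ((1 / 2 : ℝ) : ℂ) := by push_cast; rfl
  rw [hh]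
  simp only [Complex.add_re, Complex.add_im, Complex.mul_re, Complex.mul_im, Complex.ofReal_re,
    Complex.ofReal_im, Complex.sub_re, Complex.zero_re, Complex.zero_im, Complex.star_def,
    Complex.conj_re, Complex.conj_im, Complex.sq_norm, Complex.normSq_apply] at *
  linear_combination u.re * e1 + u.im * e2 + v.re * e3 + v.im * e4 + p.re * e5 + p.im * e6

/-- If Re(s) ≥ 0, then
Re(s)·‖w‖² + (1/R)·‖Dw‖² ≤ ‖w‖² + ‖w‖·‖H‖. -/
theorem energy_estimate_real_part
    (R : ℝ) (hR : 0 < R) (s : ℂ)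
    (u v p F G : ℝ → ℝ → ℂ)
    (hu : SmoothFn u) (hv : SmoothFn v) (hp : SmoothFn p) (hF : SmoothFn F) (hG : SmoothFn G)
    (hup : PeriodicX u) (hvp : PeriodicX v) (hpp : PeriodicX p)
    (hFp : PeriodicX F) (hGp : PeriodicX G)
    (hub0 : ∀ x, u x 0 = 0) (hub1 : ∀ x, u x 1 = 0)
    (hvb0 : ∀ x, v x 0 = 0) (hvb1 : ∀ x, v x 1 = 0)
    (hdiv : ∀ x y, pdx u x y + pdy v x y = 0)
    (heq1 : ∀ x ∈ Set.Icc (0:ℝ) 1, ∀ y ∈ Set.Icc (0:ℝ) 1,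
      s * u x y + (y:ℂ) * pdx u x y + v x y + pdx p x y
        = (1/(R:ℂ)) * lap u x y + F x y)
    (heq2 : ∀ x ∈ Set.Icc (0:ℝ) 1, ∀ y ∈ Set.Icc (0:ℝ) 1,
      s * v x y + (y:ℂ) * pdx v x y + pdy p x y
        = (1/(R:ℂ)) * lap v x y + G x y)
    (hsre : 0 ≤ s.re) :
    s.re * (nsq u + nsq v)
      + (1/R) * (nsq (pdx u) + nsq (pdy u) + nsq (pdx v) + nsq (pdy v))
      ≤ (nsq u + nsq v)
        + Real.sqrt (nsq u + nsq v) * Real.sqrt (nsq F + nsq G) := by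
  obtain ⟨r, hr⟩ : ∃ r : ℝ, r = 1 / R := ⟨_, rfl⟩
  have hrc : (1 / (R : ℂ)) = (r : ℂ) := by rw [hr]; push_cast; rfl
  rw [← hr]
  rw [hrc] at heq1 heq2
  have key : ∀ t : ℝ, 0 < t →
      s.re * (nsq u + nsq v) + r * (nsq (pdx u) + nsq (pdy u) + nsq (pdx v) + nsq (pdy v))
        - (nsq u + nsq v) ≤ t / 2 * (nsq u + nsq v) + 1 / (2 * t) * (nsq F + nsq G) := by
    intro t ht
    have hA := fluxA_smooth r hu hv hp
    have hB := fluxB_smooth r hu hv hp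
    have jA : JJ (fun x y => (pdx (fluxA r u v p) x y).re) = 0 := by
      refine JJ_pdx hA fun x y => ?_
      simp only [fluxA, hup x y, hvp x y, hpp x y, hup.px x y, hvp.px x y]
    have jB : JJ (fun x y => (pdy (fluxB r u v p) x y).re) = 0 := by
      refine JJ_pdy hB (fun x => ?_) (fun x => ?_) <;> simp [fluxB, hub0, hub1, hvb0, hvb1]
    have cW := hu.c2n.add hv.c2n
    have cD := ((hu.px.c2n.add hu.py.c2n).add hv.px.c2n).add hv.py.c2n
    have cH := hF.c2n.add hG.c2n
    have main := JJ_mono ((cW.cmul s.re).add (cD.cmul r))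
      ((((cW.cmul (1 + t / 2)).add (cH.cmul (1 / (2 * t)))).add hA.px.c2r).add hB.py.c2r) ?_
    · rw [JJ_add (cW.cmul s.re) (cD.cmul r),
        JJ_add (((cW.cmul (1 + t / 2)).add (cH.cmul (1 / (2 * t)))).add hA.px.c2r) hB.py.c2r,
        JJ_add ((cW.cmul (1 + t / 2)).add (cH.cmul (1 / (2 * t)))) hA.px.c2r,
        JJ_add (cW.cmul (1 + t / 2)) (cH.cmul (1 / (2 * t))), jA, jB,
        JJ_mul, JJ_mul, JJ_mul, JJ_mul, JJ_add hu.c2n hv.c2n, JJ_add hF.c2n hG.c2n,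
        JJ_add ((hu.px.c2n.add hu.py.c2n).add hv.px.c2n) hv.py.c2n,
        JJ_add (hu.px.c2n.add hu.py.c2n) hv.px.c2n, JJ_add hu.px.c2n hu.py.c2n] at main
      change s.re * (nsq u + nsq v)
        + r * (nsq (pdx u) + nsq (pdy u) + nsq (pdx v) + nsq (pdy v))
        ≤ (1 + t / 2) * (nsq u + nsq v) + 1 / (2 * t) * (nsq F + nsq G) + 0 + 0 at main
      linarith
    · intro x hx y hy
      have id := pointwise_identity r y s (u x y) (v x y) (p x y) (pdx u x y) (pdy u x y)
        (pdx v x y) (pdy v x y) (pdx p x y) (pdy p x y) (pdx (pdx u) x y) (pdy (pdy u) x y)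
        (pdx (pdx v) x y) (pdy (pdy v) x y) (F x y) (G x y) (hdiv x y)
        (heq1 x hx y hy) (heq2 x hx y hy)
      rw [← pdx_fluxA r hu hv hp, ← pdy_fluxB r hu hv hp] at id
      have b1 : ∀ a b : ℝ, a * b ≤ t / 2 * a ^ 2 + 1 / (2 * t) * b ^ 2 := by
        intro a b
        have : t / 2 * a ^ 2 + 1 / (2 * t) * b ^ 2 - a * b = (t * a - b) ^ 2 / (2 * t) := by
          field_simp; ring
        have : 0 ≤ (t * a - b) ^ 2 / (2 * t) := by positivity
        linarith
      have c1 := b1 (u x y).re (F x y).re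
      have c2 := b1 (u x y).im (F x y).im
      have c3 := b1 (v x y).re (G x y).re
      have c4 := b1 (v x y).im (G x y).im
      have n : ∀ z : ℂ, ‖z‖ ^ 2 = z.re ^ 2 + z.im ^ 2 := by
        intro z; rw [Complex.sq_norm, Complex.normSq_apply]; ring
      have d1 : -((u x y).re * (v x y).re + (u x y).im * (v x y).im)
          ≤ ‖u x y‖ ^ 2 + ‖v x y‖ ^ 2 := by
        rw [n, n]
        nlinarith [sq_nonneg ((u x y).re + (v x y).re), sq_nonneg ((u x y).im + (v x y).im),
          sq_nonneg (u x y).re, sq_nonneg (u x y).im, sq_nonneg (v x y).re, sq_nonneg (v x y).im]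
      have d2 : (u x y).re * (F x y).re + (u x y).im * (F x y).im + (v x y).re * (G x y).re
          + (v x y).im * (G x y).im
          ≤ t / 2 * (‖u x y‖ ^ 2 + ‖v x y‖ ^ 2) + 1 / (2 * t) * (‖F x y‖ ^ 2 + ‖G x y‖ ^ 2) := by
        rw [n, n, n, n]; linarith
      beta_reduce
      linarith
  have := le_sqrt_mul_of_forall (add_nonneg (JJ_nonneg_nsq u) (JJ_nonneg_nsq v))
    (add_nonneg (JJ_nonneg_nsq F) (JJ_nonneg_nsq G)) key
  linarith

end
end

section
/- If |k| > √(R/√2) and I = F' − i·k·G, where F : [0,1] → ℂ is continuously differentiable and G : [0,1] → ℂ is continuous, then k²·‖ψ‖² ≤ 16·R²·(‖F‖² + ‖G‖²) and ‖ψ'‖² ≤ 16·R²·(‖F‖² + ‖G‖²). -/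
open MeasureTheory Complex

noncomputable section

/-- Square of the L² norm over [0,1]. -/
def l2sq (f : ℝ → ℂ) : ℝ := ∫ y in (0:ℝ)..(1:ℝ), ‖f y‖ ^ 2

/-- L² inner product over [0,1]. -/
def l2ip (f g : ℝ → ℂ) : ℂ := ∫ y in (0:ℝ)..(1:ℝ), (starRingEnd ℂ) (f y) * g y

/-- Real algebraic inequality used pointwise. -/
lemma os_real_ineq (R K a b f g : ℝ) (hR : 0 < R) (hK : 1 ≤ K) (hRK : R ≤ Real.sqrt 2 * K)
    (ha : 0 ≤ a) (hb : 0 ≤ b) :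
    a ^ 2 + b ^ 2 + 4 * (R * b * g + R * a * f + R * a * b - K * b ^ 2 - 2 * K * a ^ 2)
      ≤ 4 * R ^ 2 * (f ^ 2 + g ^ 2) := by
  have h2 : Real.sqrt 2 ^ 2 = 2 := Real.sq_sqrt (by norm_num)
  have hab : 0 ≤ a * b := mul_nonneg ha hb
  have h1 : R * (a * b) ≤ Real.sqrt 2 * K * (a * b) := mul_le_mul_of_nonneg_right hRK hab
  have h3 : Real.sqrt 2 * (a * b) ≤ a ^ 2 + b ^ 2 / 2 := by
    nlinarith [sq_nonneg (Real.sqrt 2 * a - b)]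
  have h4 : K * (Real.sqrt 2 * (a * b)) ≤ K * (a ^ 2 + b ^ 2 / 2) :=
    mul_le_mul_of_nonneg_left h3 (by linarith)
  have h5 : (a ^ 2 + b ^ 2 / 2) ≤ K * (a ^ 2 + b ^ 2 / 2) := by
    nlinarith [sq_nonneg a, sq_nonneg b]
  nlinarith [sq_nonneg (a - 2 * R * f), sq_nonneg (b - 2 * R * g), sq_nonneg a, sq_nonneg b]

/-- Pointwise bound for the real part. -/
lemma os_pointwise (R k y : ℝ) (s p q r F G D : ℂ) (hR : 0 < R) (hs : 0 ≤ s.re)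
    (hK : 1 ≤ k ^ 2) (hRK : R ≤ Real.sqrt 2 * k ^ 2)
    (hD : D = -(I * k * (starRingEnd ℂ p * G)) - (s * k ^ 2 + k ^ 4 / R + I * k ^ 3 * y) * (‖p‖ : ℂ) ^ 2
      - (1 / (R : ℂ)) * (‖r‖ : ℂ) ^ 2 - I * k * (starRingEnd ℂ p * q)
      - (s + 2 * k ^ 2 / R + I * k * y) * (‖q‖ : ℂ) ^ 2 - starRingEnd ℂ q * F) :
    ‖q‖ ^ 2 + k ^ 2 * ‖p‖ ^ 2 + 4 * R * D.re ≤ 4 * R ^ 2 * (‖F‖ ^ 2 + ‖G‖ ^ 2) := by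
  have e1 : -(I * k * (starRingEnd ℂ p * G)).re ≤ |k| * ‖p‖ * ‖G‖ := by
    refine (neg_le_abs _).trans ((Complex.abs_re_le_norm _).trans (le_of_eq ?_))
    simp [mul_assoc]
  have e2 : -(I * k * (starRingEnd ℂ p * q)).re ≤ |k| * ‖p‖ * ‖q‖ := by
    refine (neg_le_abs _).trans ((Complex.abs_re_le_norm _).trans (le_of_eq ?_))
    simp [mul_assoc]
  have e3 : -(starRingEnd ℂ q * F).re ≤ ‖q‖ * ‖F‖ := by
    refine (neg_le_abs _).trans ((Complex.abs_re_le_norm _).trans (le_of_eq ?_))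
    simp
  have e4 : ((s * k ^ 2 + k ^ 4 / R + I * k ^ 3 * y) * (‖p‖ : ℂ) ^ 2).re
      = (s.re * k ^ 2 + k ^ 4 / R) * ‖p‖ ^ 2 := by
    have : (s * k ^ 2 + k ^ 4 / R + I * k ^ 3 * y) * (‖p‖ : ℂ) ^ 2
      = ((k ^ 2 * ‖p‖ ^ 2 : ℝ) : ℂ) * s + ((k ^ 4 / R * ‖p‖ ^ 2 : ℝ) : ℂ)
        + ((k ^ 3 * y * ‖p‖ ^ 2 : ℝ) : ℂ) * I := by push_cast; ring
    rw [this, add_re, add_re, re_ofReal_mul, re_ofReal_mul, ofReal_re, I_re]; ring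
  have e5 : ((s + 2 * k ^ 2 / R + I * k * y) * (‖q‖ : ℂ) ^ 2).re
      = (s.re + 2 * k ^ 2 / R) * ‖q‖ ^ 2 := by
    have : (s + 2 * k ^ 2 / R + I * k * y) * (‖q‖ : ℂ) ^ 2
      = ((‖q‖ ^ 2 : ℝ) : ℂ) * s + ((2 * k ^ 2 / R * ‖q‖ ^ 2 : ℝ) : ℂ)
        + ((k * y * ‖q‖ ^ 2 : ℝ) : ℂ) * I := by push_cast; ring
    rw [this, add_re, add_re, re_ofReal_mul, re_ofReal_mul, ofReal_re, I_re]; ring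
  have e6 : ((1 / (R : ℂ)) * (‖r‖ : ℂ) ^ 2).re = 1 / R * ‖r‖ ^ 2 := by
    have : (1 / (R : ℂ)) * (‖r‖ : ℂ) ^ 2 = ((1 / R * ‖r‖ ^ 2 : ℝ) : ℂ) := by push_cast; ring
    rw [this, ofReal_re]
  have hDre : D.re ≤ |k| * ‖p‖ * ‖G‖ - k ^ 4 / R * ‖p‖ ^ 2 + |k| * ‖p‖ * ‖q‖
      - 2 * k ^ 2 / R * ‖q‖ ^ 2 + ‖q‖ * ‖F‖ := by
    rw [hD]
    simp only [sub_re, neg_re]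
    rw [e4, e5, e6]
    have n1 : 0 ≤ s.re * k ^ 2 * ‖p‖ ^ 2 := by positivity
    have n2 : 0 ≤ s.re * ‖q‖ ^ 2 := by positivity
    have n3 : 0 ≤ 1 / R * ‖r‖ ^ 2 := by positivity
    linarith
  have h := mul_le_mul_of_nonneg_left hDre hR.le
  have hr : R * (|k| * ‖p‖ * ‖G‖ - k ^ 4 / R * ‖p‖ ^ 2 + |k| * ‖p‖ * ‖q‖
      - 2 * k ^ 2 / R * ‖q‖ ^ 2 + ‖q‖ * ‖F‖) = R * (|k| * ‖p‖) * ‖G‖ + R * ‖q‖ * ‖F‖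
      + R * ‖q‖ * (|k| * ‖p‖) - k ^ 2 * (|k| * ‖p‖) ^ 2 - 2 * k ^ 2 * ‖q‖ ^ 2 := by
    rw [mul_pow, sq_abs]; field_simp; ring
  have hm := os_real_ineq R (k ^ 2) ‖q‖ (|k| * ‖p‖) ‖F‖ ‖G‖ hR hK hRK (norm_nonneg _)
    (by positivity)
  rw [hr] at h
  rw [mul_pow, sq_abs] at hm h
  linarith

/-- estimates for ψ when |k| > √(R/√2) and I = F' − i·k·G. -/
theorem orr_sommerfeld_estimates_large_k
    (R : ℝ) (hR : 0 < R) (k : ℤ) (s : ℂ) (hs : 0 ≤ s.re)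
    (ψ : ℝ → ℂ) (hψ : ContDiff ℝ 4 ψ)
    (hb0 : ψ 0 = 0) (hb1 : ψ 1 = 0) (hb0' : deriv ψ 0 = 0) (hb1' : deriv ψ 1 = 0)
    (F G : ℝ → ℂ) (hF : ContDiff ℝ 1 F) (hG : Continuous G)
    (heq : ∀ y ∈ Set.Icc (0:ℝ) 1,
      (1/(R:ℂ)) * iteratedDeriv 4 ψ y
        - (s + 2 * (k:ℂ)^2 / (R:ℂ) + Complex.I * (k:ℂ) * (y:ℂ)) * iteratedDeriv 2 ψ y
        + (s * (k:ℂ)^2 + (k:ℂ)^4 / (R:ℂ) + Complex.I * (k:ℂ)^3 * (y:ℂ)) * ψ y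
        = deriv F y - Complex.I * (k:ℂ) * G y)
    (hk : Real.sqrt (R / Real.sqrt 2) < |(k:ℝ)|) :
    (k:ℝ)^2 * l2sq ψ ≤ 16 * R^2 * (l2sq F + l2sq G)
      ∧ l2sq (deriv ψ) ≤ 16 * R^2 * (l2sq F + l2sq G) := by
  have hk0 : (k:ℝ) ≠ 0 := by
    intro h0
    rw [h0, abs_zero] at hk
    exact absurd hk (not_lt.mpr (Real.sqrt_nonneg _))
  have hK : (1:ℝ) ≤ (k:ℝ) ^ 2 := by
    have : k ≠ 0 := by exact_mod_cast hk0
    have h1 : 0 < k ^ 2 := by positivity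
    exact_mod_cast h1
  have hs2 : 0 < Real.sqrt 2 := by positivity
  have hRK : R ≤ Real.sqrt 2 * (k:ℝ) ^ 2 := by
    have h1 := (Real.sqrt_lt' (abs_pos.mpr hk0)).mp hk
    rw [sq_abs, div_lt_iff₀ hs2] at h1
    linarith
  have hc : ∀ n : ℕ, n ≤ 4 → Continuous (iteratedDeriv n ψ) := fun n hn =>
    hψ.continuous_iteratedDeriv n (by exact_mod_cast hn)
  have hd : ∀ n : ℕ, n < 4 → ∀ y, HasDerivAt (iteratedDeriv n ψ) (iteratedDeriv (n+1) ψ y) y := by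
    intro n hn y
    rw [iteratedDeriv_succ]
    exact (hψ.differentiable_iteratedDeriv n (by exact_mod_cast hn) y).hasDerivAt
  have hFd : ∀ y, HasDerivAt F (deriv F y) y := fun y =>
    (hF.differentiable (by norm_num) y).hasDerivAt
  have hFc : Continuous F := hF.continuous
  have hFc' : Continuous (deriv F) := hF.continuous_deriv (by norm_num)
  have c0 : Continuous ψ := hψ.continuous
  have d0 : ∀ y, HasDerivAt ψ (deriv ψ y) y := by
    intro y; simpa [iteratedDeriv_one] using hd 0 (by norm_num) y
  have c1 : Continuous (deriv ψ) := by simpa [iteratedDeriv_one] using hc 1 (by norm_num)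
  have d1 : ∀ y, HasDerivAt (deriv ψ) (iteratedDeriv 2 ψ y) y := by
    intro y; simpa [iteratedDeriv_one] using hd 1 (by norm_num) y
  have c2 := hc 2 (by norm_num)
  have c3 := hc 3 (by norm_num)
  have c4 := hc 4 (by norm_num)
  have d2 := hd 2 (by norm_num)
  have d3 := hd 3 (by norm_num)
  norm_num at d2 d3
  generalize hp1 : deriv ψ = p1 at *
  generalize hp2 : iteratedDeriv 2 ψ = p2 at *
  generalize hp3 : iteratedDeriv 3 ψ = p3 at *
  generalize hp4 : iteratedDeriv 4 ψ = p4 at *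
  have cj : Continuous (starRingEnd ℂ) := Complex.continuous_conj
  have dconj : ∀ (f : ℝ → ℂ) (f' : ℂ) (y : ℝ), HasDerivAt f f' y →
      HasDerivAt (fun x => starRingEnd ℂ (f x)) (starRingEnd ℂ f') y := fun f f' y h => h.star
  set D : ℝ → ℂ := fun y =>
    (1/(R:ℂ)) * ((starRingEnd ℂ (p1 y) * p3 y + starRingEnd ℂ (ψ y) * p4 y)
      - (starRingEnd ℂ (p2 y) * p2 y + starRingEnd ℂ (p1 y) * p3 y))
    - ((I * (k:ℂ)) * (starRingEnd ℂ (ψ y) * p1 y)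
      + (s + 2 * (k:ℂ)^2 / (R:ℂ) + I * (k:ℂ) * (y:ℂ))
        * (starRingEnd ℂ (p1 y) * p1 y + starRingEnd ℂ (ψ y) * p2 y))
    - (starRingEnd ℂ (p1 y) * F y + starRingEnd ℂ (ψ y) * deriv F y) with hDdef
  have cD : Continuous D := by
    rw [hDdef]; fun_prop
  have hH : ∀ y, HasDerivAt (fun y : ℝ =>
    (1/(R:ℂ)) * (starRingEnd ℂ (ψ y) * p3 y - starRingEnd ℂ (p1 y) * p2 y)
    - (s + 2 * (k:ℂ)^2 / (R:ℂ) + I * (k:ℂ) * (y:ℂ)) * (starRingEnd ℂ (ψ y) * p1 y)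
    - starRingEnd ℂ (ψ y) * F y) (D y) y := by
    intro y
    have j0 := dconj _ _ _ (d0 y)
    have j1 := dconj _ _ _ (d1 y)
    have lin : HasDerivAt (fun y : ℝ => s + 2 * (k:ℂ)^2 / (R:ℂ) + I * (k:ℂ) * (y:ℂ))
        (I * (k:ℂ)) y := by
      simpa using ((Complex.ofRealCLM.hasDerivAt (x := y)).const_mul (I * (k:ℂ))).const_add
        (s + 2 * (k:ℂ)^2 / (R:ℂ))
    exact ((((j0.mul (d3 y)).sub (j1.mul (d2 y))).const_mul (1/(R:ℂ))).sub
      (lin.mul (j0.mul (d1 y)))).sub (j0.mul (hFd y))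
  have hInt : ∫ y in (0:ℝ)..1, (D y).re = 0 := by
    have h := intervalIntegral.integral_eq_sub_of_hasDerivAt (a := 0) (b := 1)
      (fun y _ => hH y) (cD.intervalIntegrable _ _)
    simp only [hb0, hb1, hb0', hb1', map_zero, zero_mul, mul_zero, sub_zero] at h
    have h2 := Complex.reCLM.intervalIntegral_comp_comm (cD.intervalIntegrable 0 1 (μ := volume))
    simp only [Complex.reCLM_apply] at h2
    rw [h2, h]; simp
  have hpt : ∀ y ∈ Set.Icc (0:ℝ) 1,
      ‖p1 y‖ ^ 2 + (k:ℝ) ^ 2 * ‖ψ y‖ ^ 2 + 4 * R * (D y).re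
        ≤ 4 * R ^ 2 * (‖F y‖ ^ 2 + ‖G y‖ ^ 2) := by
    intro y hy
    refine os_pointwise R k y s (ψ y) (p1 y) (p2 y) (F y) (G y) (D y) hR hs hK hRK ?_
    rw [← Complex.conj_mul', ← Complex.conj_mul', ← Complex.conj_mul']
    simp only [hDdef, Complex.ofReal_intCast]
    linear_combination (starRingEnd ℂ (ψ y)) * heq y hy
  have cDr : Continuous (fun y => (D y).re) := Complex.continuous_re.comp cD
  have hmono := intervalIntegral.integral_mono_on (μ := volume) (a := 0) (b := 1) zero_le_one
    (Continuous.intervalIntegrable (by fun_prop) _ _)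
    (Continuous.intervalIntegrable (by fun_prop) _ _) hpt
  have i1 : IntervalIntegrable (fun y => ‖p1 y‖ ^ 2) volume 0 1 :=
    Continuous.intervalIntegrable (by fun_prop) _ _
  have i2 : IntervalIntegrable (fun y => (k:ℝ) ^ 2 * ‖ψ y‖ ^ 2) volume 0 1 :=
    Continuous.intervalIntegrable (by fun_prop) _ _
  have i3 : IntervalIntegrable (fun y => 4 * R * (D y).re) volume 0 1 :=
    Continuous.intervalIntegrable (by fun_prop) _ _
  have i4 : IntervalIntegrable (fun y => ‖F y‖ ^ 2) volume 0 1 :=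
    Continuous.intervalIntegrable (by fun_prop) _ _
  have i5 : IntervalIntegrable (fun y => ‖G y‖ ^ 2) volume 0 1 :=
    Continuous.intervalIntegrable (by fun_prop) _ _
  rw [intervalIntegral.integral_add (i1.add i2) i3, intervalIntegral.integral_add i1 i2,
    intervalIntegral.integral_const_mul, intervalIntegral.integral_const_mul,
    intervalIntegral.integral_const_mul, intervalIntegral.integral_add i4 i5, hInt] at hmono
  have nn : ∀ f : ℝ → ℂ, 0 ≤ l2sq f := fun f =>
    intervalIntegral.integral_nonneg zero_le_one (fun _ _ => by positivity)
  have m : l2sq p1 + (k:ℝ) ^ 2 * l2sq ψ ≤ 4 * R ^ 2 * (l2sq F + l2sq G) := by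
    simpa [l2sq] using hmono
  have n1 := nn p1
  have n2 : 0 ≤ (k:ℝ) ^ 2 * l2sq ψ := mul_nonneg (sq_nonneg _) (nn ψ)
  have n3 : 0 ≤ R ^ 2 * (l2sq F + l2sq G) := mul_nonneg (sq_nonneg _) (add_nonneg (nn F) (nn G))
  constructor <;> linarith


end
end

section
/- If |k| > √(R/√2) and I = F' − i·k·G, where F : [0,1] → ℂ is continuously differentiable and G : [0,1] → ℂ is continuous, then k²·‖ψ''‖² + k⁴·‖ψ'‖² + k⁶·‖ψ‖² ≤ 16·R²·(‖F‖² + ‖G‖²). -/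
open MeasureTheory Complex

noncomputable section

/-- Pointwise Young-type inequality on real numbers. -/
lemma os_real_young (R K a p q f g : ℝ) (hK : 0 < K) (hRK : R ^ 2 ≤ 2 * K ^ 4) :
    K ^ 2 * a ^ 2 + K ^ 4 * p ^ 2 + K ^ 6 * q ^ 2 - 16 * R ^ 2 * (f ^ 2 + g ^ 2)
      ≤ 8 * K ^ 2 * (a ^ 2 + 2 * K ^ 2 * p ^ 2 + K ^ 4 * q ^ 2
          - R * (K * g * q + K * p * q + p * f)) := by
  have h1 : 0 ≤ (K ^ 2 * p - 4 * R * f) ^ 2 := sq_nonneg _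
  have h2 : 0 ≤ (K ^ 3 * q - 4 * R * g) ^ 2 := sq_nonneg _
  have h3 : 0 ≤ K ^ 2 * (2 * K * p - R * q) ^ 2 := by positivity
  have h4 : 0 ≤ (2 * K ^ 4 - R ^ 2) * (K ^ 2 * q ^ 2) :=
    mul_nonneg (by linarith) (by positivity)
  have h5 : 0 ≤ K ^ 2 * a ^ 2 := by positivity
  have h6 : 0 ≤ K ^ 4 * p ^ 2 := by positivity
  have h7 : 0 ≤ K ^ 6 * q ^ 2 := by positivity
  nlinarith

/-- The derivative of the energy flux. -/
def osD (R : ℝ) (k : ℤ) (s : ℂ) (y : ℝ) (u u1 u2 F G : ℂ) : ℂ :=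
  - (starRingEnd ℂ u2 * u2) / (R:ℂ)
   - (s + 2 * (k:ℂ)^2 / (R:ℂ) + Complex.I * (k:ℂ) * (y:ℂ)) * (starRingEnd ℂ u1 * u1)
   - (s * (k:ℂ)^2 + (k:ℂ)^4 / (R:ℂ) + Complex.I * (k:ℂ)^3 * (y:ℂ)) * (starRingEnd ℂ u * u)
   - Complex.I * (k:ℂ) * (starRingEnd ℂ u * G) - Complex.I * (k:ℂ) * (starRingEnd ℂ u * u1)
   - starRingEnd ℂ u1 * F

lemma os_re_le (R : ℝ) (hR : 0 < R) (k : ℤ) (s : ℂ) (hs : 0 ≤ s.re) (y : ℝ) (u u1 u2 F G : ℂ) :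
    R * (osD R k s y u u1 u2 F G).re ≤
      - (‖u2‖ ^ 2 + 2 * |(k:ℝ)| ^ 2 * ‖u1‖ ^ 2 + |(k:ℝ)| ^ 4 * ‖u‖ ^ 2
          - R * (|(k:ℝ)| * ‖G‖ * ‖u‖ + |(k:ℝ)| * ‖u1‖ * ‖u‖ + ‖u1‖ * ‖F‖)) := by
  have e : ∀ z : ℂ, starRingEnd ℂ z * z = ((‖z‖ ^ 2 : ℝ) : ℂ) := fun z => by
    rw [Complex.conj_mul']; push_cast; rfl
  have n1 : -(Complex.I * (k:ℂ) * (starRingEnd ℂ u * G)).re ≤ |(k:ℝ)| * ‖G‖ * ‖u‖ := by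
    refine (neg_le_abs _).trans ((Complex.abs_re_le_norm _).trans (le_of_eq ?_))
    simp; ring
  have n2 : -(Complex.I * (k:ℂ) * (starRingEnd ℂ u * u1)).re ≤ |(k:ℝ)| * ‖u1‖ * ‖u‖ := by
    refine (neg_le_abs _).trans ((Complex.abs_re_le_norm _).trans (le_of_eq ?_))
    simp; ring
  have n3 : -(starRingEnd ℂ u1 * F).re ≤ ‖u1‖ * ‖F‖ := by
    refine (neg_le_abs _).trans ((Complex.abs_re_le_norm _).trans (le_of_eq ?_))
    simp
  have m : (osD R k s y u u1 u2 F G).re =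
      - ‖u2‖ ^ 2 / R - (s.re + 2 * (k:ℝ)^2 / R) * ‖u1‖ ^ 2
      - (s.re * (k:ℝ)^2 + (k:ℝ)^4 / R) * ‖u‖ ^ 2
      + -(Complex.I * (k:ℂ) * (starRingEnd ℂ u * G)).re
      + -(Complex.I * (k:ℂ) * (starRingEnd ℂ u * u1)).re
      + -(starRingEnd ℂ u1 * F).re := by
    have a1 : (- (starRingEnd ℂ u2 * u2) / (R:ℂ)).re = - ‖u2‖ ^ 2 / R := by
      rw [e, ← Complex.ofReal_neg, ← Complex.ofReal_div, Complex.ofReal_re]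
    have a2 : ((s + 2 * (k:ℂ)^2 / (R:ℂ) + Complex.I * (k:ℂ) * (y:ℂ))
        * (starRingEnd ℂ u1 * u1)).re = (s.re + 2 * (k:ℝ)^2 / R) * ‖u1‖ ^ 2 := by
      rw [e, Complex.re_mul_ofReal]
      have : s + 2 * (k:ℂ)^2 / (R:ℂ) + Complex.I * (k:ℂ) * (y:ℂ)
        = s + ((2 * (k:ℝ)^2 / R : ℝ) : ℂ) + ((k * y : ℝ) : ℂ) * Complex.I := by
        push_cast; ring
      rw [this]
      simp only [Complex.add_re, Complex.ofReal_re, Complex.re_ofReal_mul, Complex.I_re]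
      ring
    have a3 : ((s * (k:ℂ)^2 + (k:ℂ)^4 / (R:ℂ) + Complex.I * (k:ℂ)^3 * (y:ℂ))
        * (starRingEnd ℂ u * u)).re = (s.re * (k:ℝ)^2 + (k:ℝ)^4 / R) * ‖u‖ ^ 2 := by
      rw [e, Complex.re_mul_ofReal]
      have : s * (k:ℂ)^2 + (k:ℂ)^4 / (R:ℂ) + Complex.I * (k:ℂ)^3 * (y:ℂ)
        = s * (((k:ℝ)^2 : ℝ) : ℂ) + (((k:ℝ)^4 / R : ℝ) : ℂ)
          + ((k ^ 3 * y : ℝ) : ℂ) * Complex.I := by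
        push_cast; ring
      rw [this]
      simp only [Complex.add_re, Complex.ofReal_re, Complex.re_ofReal_mul, Complex.I_re,
        Complex.re_mul_ofReal]
      ring
    unfold osD
    simp only [Complex.sub_re] at *
    rw [a1, a2, a3]
    ring
  have k2 : |(k:ℝ)| ^ 2 = (k:ℝ)^2 := sq_abs _
  have k4 : |(k:ℝ)| ^ 4 = (k:ℝ)^4 := by
    rw [show (4:ℕ) = 2 * 2 from rfl, pow_mul, k2, pow_mul]
  rw [m, k2, k4]
  have q1 : 0 ≤ R * s.re * ‖u1‖ ^ 2 := by positivity
  have q2 : 0 ≤ R * s.re * (k:ℝ) ^ 2 * ‖u‖ ^ 2 := by positivity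
  have n := mul_le_mul_of_nonneg_left (add_le_add (add_le_add n1 n2) n3) hR.le
  have ex : ∀ A : ℝ, R * (- ‖u2‖ ^ 2 / R - (s.re + 2 * (k:ℝ)^2 / R) * ‖u1‖ ^ 2
      - (s.re * (k:ℝ)^2 + (k:ℝ)^4 / R) * ‖u‖ ^ 2 + A) =
      - ‖u2‖ ^ 2 - 2 * (k:ℝ)^2 * ‖u1‖ ^ 2 - (k:ℝ)^4 * ‖u‖ ^ 2
       - R * s.re * ‖u1‖ ^ 2 - R * s.re * (k:ℝ) ^ 2 * ‖u‖ ^ 2 + R * A := by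
    intro A; field_simp; ring
  rw [add_assoc, add_assoc, ex]
  linarith

/-- combined estimate for ψ when |k| > √(R/√2) and I = F' − i·k·G. -/
theorem orr_sommerfeld_full_estimate_large_k
    (R : ℝ) (hR : 0 < R) (k : ℤ) (s : ℂ) (hs : 0 ≤ s.re)
    (ψ : ℝ → ℂ) (hψ : ContDiff ℝ 4 ψ)
    (hb0 : ψ 0 = 0) (hb1 : ψ 1 = 0) (hb0' : deriv ψ 0 = 0) (hb1' : deriv ψ 1 = 0)
    (F G : ℝ → ℂ) (hF : ContDiff ℝ 1 F) (hG : Continuous G)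
    (heq : ∀ y ∈ Set.Icc (0:ℝ) 1,
      (1/(R:ℂ)) * iteratedDeriv 4 ψ y
        - (s + 2 * (k:ℂ)^2 / (R:ℂ) + Complex.I * (k:ℂ) * (y:ℂ)) * iteratedDeriv 2 ψ y
        + (s * (k:ℂ)^2 + (k:ℂ)^4 / (R:ℂ) + Complex.I * (k:ℂ)^3 * (y:ℂ)) * ψ y
        = deriv F y - Complex.I * (k:ℂ) * G y)
    (hk : Real.sqrt (R / Real.sqrt 2) < |(k:ℝ)|) :
    (k:ℝ)^2 * l2sq (iteratedDeriv 2 ψ) + (k:ℝ)^4 * l2sq (deriv ψ)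
      + (k:ℝ)^6 * l2sq ψ ≤ 16 * R^2 * (l2sq F + l2sq G) := by
  set K : ℝ := |(k:ℝ)| with hKdef
  have hK : 0 < K := lt_of_le_of_lt (Real.sqrt_nonneg _) hk
  have hRK : R ^ 2 ≤ 2 * K ^ 4 := by
    have h2 : (0:ℝ) < Real.sqrt 2 := by positivity
    have h1 : R / Real.sqrt 2 < K ^ 2 := (Real.sqrt_lt' hK).1 hk
    rw [div_lt_iff₀ h2] at h1
    calc R ^ 2 ≤ (K ^ 2 * Real.sqrt 2) ^ 2 := by gcongr
      _ = 2 * K ^ 4 := by rw [mul_pow, Real.sq_sqrt (by norm_num)]; ring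
  have d : ∀ n : ℕ, n < 4 → ∀ y, HasDerivAt (iteratedDeriv n ψ) (iteratedDeriv (n+1) ψ y) y := by
    intro n hn y
    rw [iteratedDeriv_succ]
    exact ((hψ.differentiable_iteratedDeriv n (by exact_mod_cast hn)) y).hasDerivAt
  have d0 : ∀ y, HasDerivAt ψ (deriv ψ y) y := fun y => by
    simpa [iteratedDeriv_zero, iteratedDeriv_one] using d 0 (by norm_num) y
  have d1 : ∀ y, HasDerivAt (deriv ψ) (iteratedDeriv 2 ψ y) y := fun y => by
    simpa [iteratedDeriv_one] using d 1 (by norm_num) y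
  have d2 := d 2 (by norm_num)
  have d3 := d 3 (by norm_num)
  norm_num at d2 d3
  have dF : ∀ y, HasDerivAt F (deriv F y) y := fun y =>
    ((hF.differentiable (by norm_num)) y).hasDerivAt
  have c0 : Continuous ψ := hψ.continuous
  have c1 : Continuous (deriv ψ) := continuous_iff_continuousAt.2 fun y => (d1 y).continuousAt
  have c2 : Continuous (iteratedDeriv 2 ψ) :=
    continuous_iff_continuousAt.2 fun y => (d2 y).continuousAt
  have cF : Continuous F := hF.continuous
  have hRc : (R:ℂ) ≠ 0 := by exact_mod_cast hR.ne'
  let D : ℝ → ℂ := fun y => osD R k s y (ψ y) (deriv ψ y) (iteratedDeriv 2 ψ y) (F y) (G y)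
  have cD : Continuous D := by
    have h := Complex.continuous_conj
    have h0 := h.comp c0
    have h1 := h.comp c1
    have h2 := h.comp c2
    simp only [Function.comp_def] at h0 h1 h2
    simp only [D, osD, div_eq_mul_inv]
    fun_prop
  let H : ℝ → ℂ := fun y => (1/(R:ℂ)) * (star (ψ y) * iteratedDeriv 3 ψ y)
    - (1/(R:ℂ)) * (star (deriv ψ y) * iteratedDeriv 2 ψ y)
    - (s + 2 * (k:ℂ)^2 / (R:ℂ) + Complex.I * (k:ℂ) * (y:ℂ)) * (star (ψ y) * deriv ψ y)
    - star (ψ y) * F y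
  have hH : ∀ y ∈ Set.uIcc (0:ℝ) 1, HasDerivAt H (D y) y := by
    intro y hy
    rw [Set.uIcc_of_le zero_le_one] at hy
    have E := heq y hy
    have dy : HasDerivAt (fun y : ℝ => s + 2 * (k:ℂ)^2 / (R:ℂ) + Complex.I * (k:ℂ) * (y:ℂ))
        (Complex.I * (k:ℂ)) y := by
      simpa using ((Complex.ofRealCLM.hasDerivAt (x := y)).const_mul
        (Complex.I * (k:ℂ))).const_add (s + 2 * (k:ℂ)^2 / (R:ℂ))
    have t := (((((d0 y).star.mul (d3 y)).const_mul (1/(R:ℂ))).sub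
      (((d1 y).star.mul (d2 y)).const_mul (1/(R:ℂ)))).sub
      (dy.mul ((d0 y).star.mul (d1 y)))).sub ((d0 y).star.mul (dF y))
    refine t.congr_deriv ?_
    simp only [D, osD, starRingEnd_apply, Pi.mul_apply]
    linear_combination (star (ψ y)) * E
  have hint : ∫ y in (0:ℝ)..1, D y = 0 := by
    rw [intervalIntegral.integral_eq_sub_of_hasDerivAt hH (cD.intervalIntegrable _ _)]
    simp [H, hb0, hb1, hb0', hb1']
  have hre : ∫ y in (0:ℝ)..1, (D y).re = 0 := by
    have := Complex.reCLM.intervalIntegral_comp_comm (cD.intervalIntegrable (μ := volume) 0 1)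
    simpa [hint] using this
  have hpt : ∀ y, K ^ 2 * ‖iteratedDeriv 2 ψ y‖ ^ 2 + K ^ 4 * ‖deriv ψ y‖ ^ 2 + K ^ 6 * ‖ψ y‖ ^ 2
      - 16 * R ^ 2 * (‖F y‖ ^ 2 + ‖G y‖ ^ 2) ≤ -(8 * K ^ 2 * R) * (D y).re := by
    intro y
    have h1 := os_real_young R K ‖iteratedDeriv 2 ψ y‖ ‖deriv ψ y‖ ‖ψ y‖ ‖F y‖ ‖G y‖ hK hRK
    have h2 := mul_le_mul_of_nonneg_left (os_re_le R hR k s hs y (ψ y) (deriv ψ y)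
      (iteratedDeriv 2 ψ y) (F y) (G y)) (show 0 ≤ 8 * K ^ 2 by positivity)
    simp only [D]
    linarith
  have ii : ∀ f : ℝ → ℂ, Continuous f → ∀ c : ℝ,
      IntervalIntegrable (fun y => c * ‖f y‖ ^ 2) volume 0 1 := fun f hf c =>
    Continuous.intervalIntegrable (by fun_prop) _ _
  have hmono := intervalIntegral.integral_mono_on (a := 0) (b := 1) (μ := volume) zero_le_one
    (Continuous.intervalIntegrable (by fun_prop) _ _)
    (Continuous.intervalIntegrable (continuous_const.mul (Complex.continuous_re.comp cD)) _ _)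
    (fun y _ => hpt y)
  simp only [Function.comp_def, mul_add, Pi.mul_apply] at hmono
  rw [intervalIntegral.integral_const_mul, hre, mul_zero,
    intervalIntegral.integral_sub (((ii _ c2 _).add (ii _ c1 _)).add (ii _ c0 _))
      ((ii _ cF _).add (ii _ hG _)),
    intervalIntegral.integral_add ((ii _ c2 _).add (ii _ c1 _)) (ii _ c0 _),
    intervalIntegral.integral_add (ii _ c2 _) (ii _ c1 _),
    intervalIntegral.integral_add (ii _ cF _) (ii _ hG _)] at hmono
  simp only [intervalIntegral.integral_const_mul] at hmono
  have k2 : K ^ 2 = (k:ℝ)^2 := sq_abs _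
  have k4 : K ^ 4 = (k:ℝ)^4 := by
    rw [show (4:ℕ) = 2 * 2 from rfl, pow_mul, k2, pow_mul]
  have k6 : K ^ 6 = (k:ℝ)^6 := by
    rw [show (6:ℕ) = 2 * 3 from rfl, pow_mul, k2, pow_mul]
  rw [k2, k4, k6] at hmono
  unfold l2sq
  linarith

end
end

section
/- If |k| > √(R/√2) and I = F', where F : [0,1] → ℂ is continuously differentiable, then the solution ψ satisfies k⁶·‖ψ‖² ≤ 2·R²·‖F‖², k⁴·‖ψ'‖² ≤ R²·‖F‖², and k²·‖ψ''‖² ≤ R²·‖F‖². -/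
open MeasureTheory Complex

noncomputable section

theorem os_young (R m a b c f : ℝ) (hR : 0 < R) (hm : 0 < m) (h : R ^ 2 ≤ 2 * m ^ 4) (D : ℝ)
    (hD : D ≤ -(c ^ 2 + 2 * m ^ 2 * b ^ 2 + m ^ 4 * a ^ 2) + R * m * a * b + R * b * f) :
    m ^ 6 * a ^ 2 - 2 * R ^ 2 * f ^ 2 ≤ (-4 * m ^ 2) * D ∧
    m ^ 4 * b ^ 2 - R ^ 2 * f ^ 2 ≤ (-2 * m ^ 2) * D ∧
    m ^ 2 * c ^ 2 - R ^ 2 * f ^ 2 ≤ (-4 * m ^ 2) * D := by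
  have h1 : m ^ 2 * (R * m * a * b) ≤ m ^ 2 * (m ^ 4 * a ^ 2 / 2 + m ^ 2 * b ^ 2) := by
    nlinarith [sq_nonneg (m ^ 3 * a - R * b), mul_le_mul_of_nonneg_right h (sq_nonneg b)]
  have h2 := mul_le_mul_of_nonneg_left hD (by positivity : 0 ≤ 4 * m ^ 2)
  have p1 : 0 ≤ m ^ 6 * a ^ 2 := by positivity
  have p2 : 0 ≤ m ^ 4 * b ^ 2 := by positivity
  have p3 : 0 ≤ m ^ 2 * c ^ 2 := by positivity
  have p4 : 0 ≤ R ^ 2 * f ^ 2 := by positivity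
  have q1 := sq_nonneg (2 * m ^ 2 * b - R * f)
  have q2 := sq_nonneg (m ^ 2 * b - R * f)
  refine ⟨?_, ?_, ?_⟩
  · nlinarith
  · nlinarith
  · nlinarith

theorem os_int (G G' : ℝ → ℂ) (hG : ∀ y ∈ Set.Icc (0:ℝ) 1, HasDerivAt G (G' y) y)
    (hG' : Continuous G') (h0 : G 0 = 0) (h1 : G 1 = 0) (u v : ℝ → ℝ) (hu : Continuous u)
    (hv : Continuous v) (c : ℝ) (h : ∀ y ∈ Set.Icc (0:ℝ) 1, u y - v y ≤ c * (G' y).re) :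
    ∫ y in (0:ℝ)..1, u y ≤ ∫ y in (0:ℝ)..1, v y := by
  have hI : ∫ y in (0:ℝ)..1, (G' y).re = 0 := by
    have := intervalIntegral.integral_eq_sub_of_hasDerivAt (a := 0) (b := 1)
      (f := fun y => (G y).re) (f' := fun y => (G' y).re)
      (fun y hy => by
        rw [Set.uIcc_of_le zero_le_one] at hy
        exact Complex.reCLM.hasFDerivAt.comp_hasDerivAt y (hG y hy))
      ((Complex.continuous_re.comp hG').intervalIntegrable _ _)
    rw [this, h0, h1]; simp
  have h2 : ∫ y in (0:ℝ)..1, (u y - v y) ≤ ∫ y in (0:ℝ)..1, c * (G' y).re :=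
    intervalIntegral.integral_mono_on zero_le_one ((hu.sub hv).intervalIntegrable _ _)
      ((continuous_const.mul (Complex.continuous_re.comp hG')).intervalIntegrable _ _) h
  rw [intervalIntegral.integral_const_mul, hI,
    intervalIntegral.integral_sub (hu.intervalIntegrable _ _) (hv.intervalIntegrable _ _)] at h2
  linarith

/-- estimates for ψ when |k| > √(R/√2) and I = F'. -/
theorem orr_sommerfeld_estimates_forcing_F
    (R : ℝ) (hR : 0 < R) (k : ℤ) (s : ℂ) (hs : 0 ≤ s.re)
    (ψ : ℝ → ℂ) (hψ : ContDiff ℝ 4 ψ)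
    (hb0 : ψ 0 = 0) (hb1 : ψ 1 = 0) (hb0' : deriv ψ 0 = 0) (hb1' : deriv ψ 1 = 0)
    (F : ℝ → ℂ) (hF : ContDiff ℝ 1 F)
    (heq : ∀ y ∈ Set.Icc (0:ℝ) 1,
      (1/(R:ℂ)) * iteratedDeriv 4 ψ y
        - (s + 2 * (k:ℂ)^2 / (R:ℂ) + Complex.I * (k:ℂ) * (y:ℂ)) * iteratedDeriv 2 ψ y
        + (s * (k:ℂ)^2 + (k:ℂ)^4 / (R:ℂ) + Complex.I * (k:ℂ)^3 * (y:ℂ)) * ψ y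
        = deriv F y)
    (hk : Real.sqrt (R / Real.sqrt 2) < |(k:ℝ)|) :
    (k:ℝ)^6 * l2sq ψ ≤ 2 * R^2 * l2sq F
      ∧ (k:ℝ)^4 * l2sq (deriv ψ) ≤ R^2 * l2sq F
      ∧ (k:ℝ)^2 * l2sq (iteratedDeriv 2 ψ) ≤ R^2 * l2sq F := by
  have hk2 : R / Real.sqrt 2 < |(k:ℝ)| ^ 2 :=
    (Real.sqrt_lt' (lt_of_le_of_lt (Real.sqrt_nonneg _) hk)).1 hk
  have hm : 0 < |(k:ℝ)| := lt_of_le_of_lt (Real.sqrt_nonneg _) hk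
  have hR2 : R ^ 2 ≤ 2 * |(k:ℝ)| ^ 4 := by
    rw [div_lt_iff₀ (by positivity)] at hk2
    have h := pow_le_pow_left₀ hR.le hk2.le 2
    rw [mul_pow, Real.sq_sqrt (by norm_num)] at h
    linarith
  have d0 : ∀ y, HasDerivAt ψ (deriv ψ y) y := fun y =>
    (hψ.differentiable (by norm_num) y).hasDerivAt
  have dn : ∀ n : ℕ, n < 4 → ∀ y,
      HasDerivAt (iteratedDeriv n ψ) (iteratedDeriv (n+1) ψ y) y := fun n hn y => by
    rw [iteratedDeriv_succ]
    exact (hψ.differentiable_iteratedDeriv n (by exact_mod_cast hn) y).hasDerivAt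
  have d1 : ∀ y, HasDerivAt (deriv ψ) (iteratedDeriv 2 ψ y) y := fun y => by
    simpa [iteratedDeriv_one] using dn 1 (by norm_num) y
  have d2 := dn 2 (by norm_num)
  have d3 := dn 3 (by norm_num)
  have dF : ∀ y, HasDerivAt F (deriv F y) y := fun y =>
    (hF.differentiable (by norm_num) y).hasDerivAt
  have c0 : Continuous ψ := hψ.continuous
  have c1 : Continuous (deriv ψ) := hψ.continuous_deriv (by norm_num)
  have c2 : Continuous (iteratedDeriv 2 ψ) := hψ.continuous_iteratedDeriv 2 (by norm_num)
  have cF : Continuous F := hF.continuous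
  have hRC : (R:ℂ) ≠ 0 := by exact_mod_cast hR.ne'
  let G : ℝ → ℂ := fun y => star (ψ y) * iteratedDeriv 3 ψ y - star (deriv ψ y) * iteratedDeriv 2 ψ y
    - (R * s + 2 * (k:ℂ)^2 + R * Complex.I * k * (y:ℂ)) * (star (ψ y) * deriv ψ y)
    - R * (star (ψ y) * F y)
  let G' : ℝ → ℂ := fun y => -(star (iteratedDeriv 2 ψ y) * iteratedDeriv 2 ψ y)
    - (R * s + 2 * (k:ℂ)^2 + R * Complex.I * k * (y:ℂ)) * (star (deriv ψ y) * deriv ψ y)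
    - R * Complex.I * k * (star (ψ y) * deriv ψ y)
    - R * (star (deriv ψ y) * F y)
    - (R * s * (k:ℂ)^2 + (k:ℂ)^4 + R * Complex.I * (k:ℂ)^3 * (y:ℂ)) * (star (ψ y) * ψ y)
  have hG : ∀ y ∈ Set.Icc (0:ℝ) 1, HasDerivAt G (G' y) y := by
    intro y hy
    have e := heq y hy
    have e' : R * deriv F y = iteratedDeriv 4 ψ y
        - (R * s + 2 * (k:ℂ)^2 + R * Complex.I * k * (y:ℂ)) * iteratedDeriv 2 ψ y
        + (R * s * (k:ℂ)^2 + (k:ℂ)^4 + R * Complex.I * (k:ℂ)^3 * (y:ℂ)) * ψ y := by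
      rw [← e]; field_simp
    have hy1 : HasDerivAt (fun y : ℝ => (R * s + 2 * (k:ℂ)^2 + R * Complex.I * k * (y:ℂ)))
        (R * Complex.I * k) y := by
      simpa using ((hasDerivAt_id y).ofReal_comp.const_mul (R * Complex.I * (k:ℂ))).const_add
        (R * s + 2 * (k:ℂ)^2)
    have := ((((d0 y).star.mul (d3 y)).sub ((d1 y).star.mul (d2 y))).sub
      (hy1.mul ((d0 y).star.mul (d1 y)))).sub (((d0 y).star.mul (dF y)).const_mul (R:ℂ))
    refine this.congr_deriv ?_
    simp only [G', Pi.mul_apply]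
    linear_combination (-star (ψ y)) * e'
  have hG'c : Continuous G' := by
    simp only [G']
    fun_prop
  have hG0 : G 0 = 0 := by simp [G, hb0, hb0']
  have hG1 : G 1 = 0 := by simp [G, hb1, hb1']
  have ns : ∀ z : ℂ, star z * z = ((‖z‖ ^ 2 : ℝ) : ℂ) := fun z => by
    simpa using Complex.conj_mul' z
  have key : ∀ y ∈ Set.Icc (0:ℝ) 1, (G' y).re ≤ -(‖iteratedDeriv 2 ψ y‖ ^ 2
      + 2 * |(k:ℝ)| ^ 2 * ‖deriv ψ y‖ ^ 2 + |(k:ℝ)| ^ 4 * ‖ψ y‖ ^ 2)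
      + R * |(k:ℝ)| * ‖ψ y‖ * ‖deriv ψ y‖ + R * ‖deriv ψ y‖ * ‖F y‖ := by
    intro y hy
    have t1 := (abs_le.1 (Complex.abs_re_le_norm
      (R * Complex.I * k * (star (ψ y) * deriv ψ y)))).1
    have t2 := (abs_le.1 (Complex.abs_re_le_norm (R * (star (deriv ψ y) * F y)))).1
    have n1 : ‖(R * Complex.I * k * (star (ψ y) * deriv ψ y))‖
        = R * |(k:ℝ)| * ‖ψ y‖ * ‖deriv ψ y‖ := by
      simp [abs_of_pos hR]; ring
    have n2 : ‖(R * (star (deriv ψ y) * F y))‖ = R * ‖deriv ψ y‖ * ‖F y‖ := by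
      simp [abs_of_pos hR]; ring
    rw [n1] at t1
    rw [n2] at t2
    have r1 : (R * s + 2 * (k:ℂ)^2 + R * Complex.I * k * (y:ℂ)).re
        = R * s.re + 2 * |(k:ℝ)| ^ 2 := by
      have : (R * s + 2 * (k:ℂ)^2 + R * Complex.I * k * (y:ℂ))
        = (R:ℂ) * s + ((2 * |(k:ℝ)| ^ 2 : ℝ):ℂ) + ((R * k * y : ℝ):ℂ) * Complex.I := by
        rw [sq_abs]; push_cast; ring
      rw [this, Complex.add_re, Complex.add_re, Complex.re_ofReal_mul, Complex.re_ofReal_mul,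
        Complex.ofReal_re]
      simp
    have r2 : (R * s * (k:ℂ)^2 + (k:ℂ)^4 + R * Complex.I * (k:ℂ)^3 * (y:ℂ)).re
        = R * s.re * |(k:ℝ)| ^ 2 + |(k:ℝ)| ^ 4 := by
      have : (R * s * (k:ℂ)^2 + (k:ℂ)^4 + R * Complex.I * (k:ℂ)^3 * (y:ℂ))
        = ((R * |(k:ℝ)| ^ 2 : ℝ):ℂ) * s + ((|(k:ℝ)| ^ 4 : ℝ):ℂ)
          + ((R * k ^ 3 * y : ℝ):ℂ) * Complex.I := by
        rw [sq_abs, Even.pow_abs (by decide)]; push_cast; ring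
      rw [this, Complex.add_re, Complex.add_re, Complex.re_ofReal_mul, Complex.re_ofReal_mul,
        Complex.ofReal_re]
      simp; ring
    have p1 : 0 ≤ R * s.re * ‖deriv ψ y‖ ^ 2 := by positivity
    have p2 : 0 ≤ R * s.re * |(k:ℝ)| ^ 2 * ‖ψ y‖ ^ 2 := by positivity
    simp only [G', ns (ψ y), ns (deriv ψ y), ns (iteratedDeriv 2 ψ y)]
    rw [Complex.sub_re, Complex.sub_re, Complex.sub_re, Complex.sub_re, Complex.re_mul_ofReal,
      Complex.re_mul_ofReal, r1, r2, Complex.neg_re, Complex.ofReal_re]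
    nlinarith
  have Y := fun y hy => os_young R |(k:ℝ)| ‖ψ y‖ ‖deriv ψ y‖ ‖iteratedDeriv 2 ψ y‖ ‖F y‖
    hR hm hR2 _ (key y hy)
  have e2 : (k:ℝ) ^ 2 = |(k:ℝ)| ^ 2 := (Even.pow_abs (by decide) _).symm
  have e4 : (k:ℝ) ^ 4 = |(k:ℝ)| ^ 4 := (Even.pow_abs (by decide) _).symm
  have e6 : (k:ℝ) ^ 6 = |(k:ℝ)| ^ 6 := (Even.pow_abs (by decide) _).symm
  rw [e2, e4, e6]
  unfold l2sq
  simp only [← intervalIntegral.integral_const_mul]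
  exact ⟨os_int G G' hG hG'c hG0 hG1 _ _ (by fun_prop) (by fun_prop) _ (fun y hy => (Y y hy).1),
    os_int G G' hG hG'c hG0 hG1 _ _ (by fun_prop) (by fun_prop) _ (fun y hy => (Y y hy).2.1),
    os_int G G' hG hG'c hG0 hG1 _ _ (by fun_prop) (by fun_prop) _ (fun y hy => (Y y hy).2.2)⟩


end
end

section
/- If |k| > √(R/√2) and I = i·k·G, where G : [0,1] → ℂ is continuous, then the solution ψ satisfies k⁶·‖ψ‖² ≤ 4·R²·‖G‖², k⁴·‖ψ'‖² ≤ 2·R²·‖G‖², and k²·‖ψ''‖² ≤ 2·R²·‖G‖². -/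
open MeasureTheory Complex

noncomputable section

/-- Pointwise real inequality behind the energy estimate. -/
lemma pointwise_young (R κ p q g : ℝ) (hR : 0 < R) (hκ : 0 < κ) (hp : 0 ≤ p)
    (h : R ^ 2 ≤ 2 * κ ^ 4) :
    κ ^ 2 * (R * κ * p * q + R * κ * p * g)
      ≤ κ ^ 2 * (κ ^ 2 * q ^ 2 + 3 / 4 * (κ ^ 4 * p ^ 2)) + R ^ 2 * g ^ 2 := by
  have h1 : R * κ * p * q ≤ κ ^ 2 * q ^ 2 + κ ^ 4 * p ^ 2 / 2 := by
    have := mul_le_mul_of_nonneg_right h (sq_nonneg p)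
    nlinarith [sq_nonneg (κ * q - R * p / 2)]
  have h2 : κ ^ 2 * (R * κ * p * g) ≤ κ ^ 2 * (κ ^ 4 * p ^ 2 / 4) + R ^ 2 * g ^ 2 := by
    nlinarith [sq_nonneg (κ ^ 3 * p / 2 - R * g)]
  nlinarith [mul_le_mul_of_nonneg_left h1 (sq_nonneg κ)]

/-- Pointwise energy inequality. -/
lemma pointwise_energy (R k y : ℝ) (hR : 0 < R) (hk0 : k ≠ 0) (hk : R ^ 2 ≤ 2 * k ^ 4)
    (s a b c e G : ℂ) (hs : 0 ≤ s.re)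
    (heq : (1/(R:ℂ)) * e - (s + 2 * (k:ℂ)^2 / (R:ℂ) + Complex.I * (k:ℂ) * (y:ℂ)) * c
        + (s * (k:ℂ)^2 + (k:ℂ)^4 / (R:ℂ) + Complex.I * (k:ℂ)^3 * (y:ℂ)) * a
        = Complex.I * (k:ℂ) * G) :
    k ^ 2 * (R * ((1/(R:ℂ)) * (star a * e - star c * c)
      - (s + 2 * (k:ℂ)^2 / (R:ℂ) + Complex.I * (k:ℂ) * (y:ℂ)) * (star b * b + star a * c)
      - Complex.I * (k:ℂ) * (star a * b)).re)
    ≤ R ^ 2 * ‖G‖ ^ 2 - (k ^ 2 * ‖c‖ ^ 2 + k ^ 4 * ‖b‖ ^ 2 + k ^ 6 / 4 * ‖a‖ ^ 2) := by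
  have hRc : (R:ℂ) ≠ 0 := by exact_mod_cast hR.ne'
  have ha : star a * a = ((‖a‖ ^ 2 : ℝ) : ℂ) := by
    rw [Complex.star_def, Complex.conj_mul']; norm_cast
  have hb : star b * b = ((‖b‖ ^ 2 : ℝ) : ℂ) := by
    rw [Complex.star_def, Complex.conj_mul']; norm_cast
  have hc : star c * c = ((‖c‖ ^ 2 : ℝ) : ℂ) := by
    rw [Complex.star_def, Complex.conj_mul']; norm_cast
  have key : ((1/(R:ℂ)) * (star a * e - star c * c)
      - (s + 2 * (k:ℂ)^2 / (R:ℂ) + Complex.I * (k:ℂ) * (y:ℂ)) * (star b * b + star a * c)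
      - Complex.I * (k:ℂ) * (star a * b))
      = (k:ℂ) * (Complex.I * (star a * G)) - (k:ℂ) * (Complex.I * (star a * b))
        - (s * ((k ^ 2 * ‖a‖ ^ 2 + ‖b‖ ^ 2 : ℝ) : ℂ)
          + ((1 / R * (‖c‖ ^ 2 + 2 * k ^ 2 * ‖b‖ ^ 2 + k ^ 4 * ‖a‖ ^ 2) : ℝ) : ℂ)
          + Complex.I * ((k * y * ‖b‖ ^ 2 + k ^ 3 * y * ‖a‖ ^ 2 : ℝ) : ℂ)) := by
    push_cast
    push_cast at ha hb hc
    rw [← ha, ← hb, ← hc]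
    linear_combination (star a) * heq
  rw [key]
  have hI : ∀ r : ℝ, (Complex.I * (r:ℂ)).re = 0 := by intro r; simp
  rw [Complex.sub_re, Complex.sub_re, Complex.add_re, Complex.add_re, hI, Complex.re_ofReal_mul,
    Complex.re_ofReal_mul, Complex.re_mul_ofReal, Complex.ofReal_re]
  have hG1 : k * (Complex.I * (star a * G)).re ≤ |k| * (‖a‖ * ‖G‖) := by
    refine (le_abs_self _).trans ?_
    rw [abs_mul]
    gcongr
    refine (Complex.abs_re_le_norm _).trans ?_
    simp
  have hG2 : -(k * (Complex.I * (star a * b)).re) ≤ |k| * (‖a‖ * ‖b‖) := by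
    refine (neg_le_abs _).trans ?_
    rw [abs_mul]
    gcongr
    refine (Complex.abs_re_le_norm _).trans ?_
    simp
  have hsp : 0 ≤ s.re * (k ^ 2 * ‖a‖ ^ 2 + ‖b‖ ^ 2) := by positivity
  have hy := pointwise_young R |k| ‖a‖ ‖b‖ ‖G‖ hR (abs_pos.mpr hk0) (norm_nonneg _)
    (by rw [Even.pow_abs (by decide)]; exact hk)
  rw [Even.pow_abs (show Even 2 by decide), Even.pow_abs (show Even 4 by decide)] at hy
  have hR1 : R * (1 / R * (‖c‖ ^ 2 + 2 * k ^ 2 * ‖b‖ ^ 2 + k ^ 4 * ‖a‖ ^ 2))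
      = ‖c‖ ^ 2 + 2 * k ^ 2 * ‖b‖ ^ 2 + k ^ 4 * ‖a‖ ^ 2 := by field_simp
  set X := k * (Complex.I * (star a * G)).re
  set Y := k * (Complex.I * (star a * b)).re
  set S := s.re * (k ^ 2 * ‖a‖ ^ 2 + ‖b‖ ^ 2)
  set E := 1 / R * (‖c‖ ^ 2 + 2 * k ^ 2 * ‖b‖ ^ 2 + k ^ 4 * ‖a‖ ^ 2)
  have h1 : R * (X - Y - (S + E + 0)) ≤ R * (|k| * (‖a‖ * ‖G‖) + |k| * (‖a‖ * ‖b‖))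
      - (‖c‖ ^ 2 + 2 * k ^ 2 * ‖b‖ ^ 2 + k ^ 4 * ‖a‖ ^ 2) := by
    rw [← hR1]
    have : R * (X - Y - (S + E + 0)) ≤
        R * (|k| * (‖a‖ * ‖G‖) + |k| * (‖a‖ * ‖b‖) - E) := by
      apply mul_le_mul_of_nonneg_left _ hR.le
      linarith
    linarith
  have h2 := mul_le_mul_of_nonneg_left h1 (sq_nonneg k)
  refine h2.trans ?_
  linarith

/-- estimates for ψ when |k| > √(R/√2) and I = i·k·G. -/
theorem orr_sommerfeld_estimates_forcing_G
    (R : ℝ) (hR : 0 < R) (k : ℤ) (s : ℂ) (hs : 0 ≤ s.re)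
    (ψ : ℝ → ℂ) (hψ : ContDiff ℝ 4 ψ)
    (hb0 : ψ 0 = 0) (hb1 : ψ 1 = 0) (hb0' : deriv ψ 0 = 0) (hb1' : deriv ψ 1 = 0)
    (G : ℝ → ℂ) (hG : Continuous G)
    (heq : ∀ y ∈ Set.Icc (0:ℝ) 1,
      (1/(R:ℂ)) * iteratedDeriv 4 ψ y
        - (s + 2 * (k:ℂ)^2 / (R:ℂ) + Complex.I * (k:ℂ) * (y:ℂ)) * iteratedDeriv 2 ψ y
        + (s * (k:ℂ)^2 + (k:ℂ)^4 / (R:ℂ) + Complex.I * (k:ℂ)^3 * (y:ℂ)) * ψ y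
        = Complex.I * (k:ℂ) * G y)
    (hk : Real.sqrt (R / Real.sqrt 2) < |(k:ℝ)|) :
    (k:ℝ)^6 * l2sq ψ ≤ 4 * R^2 * l2sq G
      ∧ (k:ℝ)^4 * l2sq (deriv ψ) ≤ 2 * R^2 * l2sq G
      ∧ (k:ℝ)^2 * l2sq (iteratedDeriv 2 ψ) ≤ 2 * R^2 * l2sq G := by
  have hk0 : (k:ℝ) ≠ 0 := by
    intro h
    rw [h, abs_zero] at hk
    exact absurd hk (not_lt.mpr (Real.sqrt_nonneg _))
  have hk2 : R ^ 2 ≤ 2 * (k:ℝ) ^ 4 := by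
    have h1 : R / Real.sqrt 2 < (k:ℝ) ^ 2 := by
      have := (Real.sqrt_lt' (abs_pos.mpr hk0)).mp hk
      rwa [sq_abs] at this
    have h2 : (R / Real.sqrt 2) ^ 2 ≤ ((k:ℝ) ^ 2) ^ 2 := by
      apply pow_le_pow_left₀ (by positivity) h1.le
    rw [div_pow, Real.sq_sqrt (by norm_num)] at h2
    linarith
  have hd : ∀ n : ℕ, n < 4 → ∀ y, HasDerivAt (iteratedDeriv n ψ) (iteratedDeriv (n+1) ψ y) y := by
    intro n hn y
    rw [iteratedDeriv_succ]
    exact (hψ.differentiable_iteratedDeriv n (by exact_mod_cast hn) y).hasDerivAt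
  have hc : ∀ n : ℕ, n ≤ 4 → Continuous (iteratedDeriv n ψ) := by
    intro n hn
    exact hψ.continuous_iteratedDeriv n (by exact_mod_cast hn)
  have hd0 : ∀ y, HasDerivAt ψ (deriv ψ y) y := by
    intro y; simpa [iteratedDeriv_one, iteratedDeriv_zero] using hd 0 (by norm_num) y
  have hd1 : ∀ y, HasDerivAt (deriv ψ) (iteratedDeriv 2 ψ y) y := by
    intro y; simpa [iteratedDeriv_one] using hd 1 (by norm_num) y
  have hd2 := hd 2 (by norm_num)
  have hd3 := hd 3 (by norm_num)
  norm_num at hd2 hd3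
  have c0 : Continuous ψ := hψ.continuous
  have c1 : Continuous (deriv ψ) := by simpa [iteratedDeriv_one] using hc 1 (by norm_num)
  have c2 := hc 2 (by norm_num)
  have c4 := hc 4 (by norm_num)
  set F : ℝ → ℂ := fun y => (1/(R:ℂ)) * (star (ψ y) * iteratedDeriv 3 ψ y
      - star (deriv ψ y) * iteratedDeriv 2 ψ y)
      - (s + 2 * (k:ℂ)^2 / (R:ℂ) + Complex.I * (k:ℂ) * (y:ℂ)) * (star (ψ y) * deriv ψ y) with hF
  set F' : ℝ → ℂ := fun y => (1/(R:ℂ)) * (star (ψ y) * iteratedDeriv 4 ψ y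
        - star (iteratedDeriv 2 ψ y) * iteratedDeriv 2 ψ y)
      - (s + 2 * (k:ℂ)^2 / (R:ℂ) + Complex.I * (k:ℂ) * (y:ℂ)) *
        (star (deriv ψ y) * deriv ψ y + star (ψ y) * iteratedDeriv 2 ψ y)
      - Complex.I * (k:ℂ) * (star (ψ y) * deriv ψ y) with hF'
  have hFd : ∀ y, HasDerivAt F (F' y) y := by
    intro y
    have hy : HasDerivAt (fun y : ℝ => s + 2 * (k:ℂ)^2 / (R:ℂ) + Complex.I * (k:ℂ) * (y:ℂ))
        (Complex.I * (k:ℂ)) y := by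
      simpa using ((Complex.ofRealCLM.hasDerivAt (x := y)).const_mul
        (Complex.I * (k:ℂ))).const_add (s + 2 * (k:ℂ)^2 / (R:ℂ))
    have s0 := (hd0 y).star
    have s1 := (hd1 y).star
    have := (((s0.mul (hd3 y)).sub (s1.mul (hd2 y))).const_mul (1/(R:ℂ))).sub
      (hy.mul (s0.mul (hd1 y)))
    refine this.congr_deriv ?_
    simp only [hF', Pi.mul_apply]
    ring
  have hF'c : Continuous F' := by
    simp only [hF']
    fun_prop
  have hint : ∫ y in (0:ℝ)..1, F' y = 0 := by
    rw [intervalIntegral.integral_eq_sub_of_hasDerivAt (fun y _ => hFd y)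
      (hF'c.intervalIntegrable _ _)]
    simp [hF, hb0, hb1, hb0', hb1']
  have hintre : ∫ y in (0:ℝ)..1, (F' y).re = 0 := by
    have h := intervalIntegral.integral_eq_sub_of_hasDerivAt (a := 0) (b := 1)
      (f := fun y => (F y).re) (f' := fun y => (F' y).re)
      (fun y _ => Complex.reCLM.hasFDerivAt.comp_hasDerivAt y (hFd y))
      ((Complex.continuous_re.comp hF'c).intervalIntegrable _ _)
    rw [h]
    simp [hF, hb0, hb1, hb0', hb1']
  have hpt : ∀ y ∈ Set.Icc (0:ℝ) 1, (k:ℝ) ^ 2 * (R * (F' y).re) ≤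
      R ^ 2 * ‖G y‖ ^ 2 - ((k:ℝ) ^ 2 * ‖iteratedDeriv 2 ψ y‖ ^ 2
        + (k:ℝ) ^ 4 * ‖deriv ψ y‖ ^ 2 + (k:ℝ) ^ 6 / 4 * ‖ψ y‖ ^ 2) := by
    intro y hy
    have := pointwise_energy R k y hR hk0 hk2 s (ψ y) (deriv ψ y) (iteratedDeriv 2 ψ y)
      (iteratedDeriv 4 ψ y) (G y) hs (by simpa using heq y hy)
    simpa [hF'] using this
  have ig : ∀ (C : ℝ) (f : ℝ → ℂ), Continuous f →
      IntervalIntegrable (fun y => C * ‖f y‖ ^ 2) volume 0 1 := by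
    intro C f hf
    exact (by fun_prop : Continuous fun y => C * ‖f y‖ ^ 2).intervalIntegrable _ _
  have hmono := intervalIntegral.integral_mono_on (μ := volume) (zero_le_one' ℝ)
    ((by fun_prop : Continuous fun y => (k:ℝ) ^ 2 * (R * (F' y).re)).intervalIntegrable _ _)
    ((ig (R ^ 2) G hG).sub (((ig ((k:ℝ) ^ 2) _ c2).add (ig ((k:ℝ) ^ 4) _ c1)).add
      (ig ((k:ℝ) ^ 6 / 4) _ c0))) hpt
  rw [intervalIntegral.integral_const_mul, intervalIntegral.integral_const_mul, hintre,
    intervalIntegral.integral_sub (ig (R ^ 2) G hG)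
      (((ig ((k:ℝ) ^ 2) _ c2).add (ig ((k:ℝ) ^ 4) _ c1)).add (ig ((k:ℝ) ^ 6 / 4) _ c0)),
    intervalIntegral.integral_add ((ig ((k:ℝ) ^ 2) _ c2).add (ig ((k:ℝ) ^ 4) _ c1))
      (ig ((k:ℝ) ^ 6 / 4) _ c0),
    intervalIntegral.integral_add (ig ((k:ℝ) ^ 2) _ c2) (ig ((k:ℝ) ^ 4) _ c1)] at hmono
  simp only [intervalIntegral.integral_const_mul] at hmono
  change _ ≤ R ^ 2 * l2sq G - ((k:ℝ) ^ 2 * l2sq (iteratedDeriv 2 ψ)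
    + (k:ℝ) ^ 4 * l2sq (deriv ψ) + (k:ℝ) ^ 6 / 4 * l2sq ψ) at hmono
  have nn : ∀ f : ℝ → ℂ, 0 ≤ l2sq f := fun f =>
    intervalIntegral.integral_nonneg zero_le_one (fun y _ => by positivity)
  have n6 : 0 ≤ (k:ℝ) ^ 6 * l2sq ψ := mul_nonneg (Even.pow_nonneg (by decide) _) (nn _)
  have n4 : 0 ≤ (k:ℝ) ^ 4 * l2sq (deriv ψ) := mul_nonneg (Even.pow_nonneg (by decide) _) (nn _)
  have n2 : 0 ≤ (k:ℝ) ^ 2 * l2sq (iteratedDeriv 2 ψ) := mul_nonneg (sq_nonneg _) (nn _)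
  have nG : 0 ≤ R ^ 2 * l2sq G := mul_nonneg (sq_nonneg _) (nn _)
  refine ⟨by linarith, by linarith, by linarith⟩

end
end

section
/- There exists a constant C₂ > 0, independent of R, k, s, F and G, such that the solution h of the second-order problem satisfies ‖h'‖² + k²·‖h‖² ≤ C₂·R²·(‖F‖² + ‖G‖²). -/
open MeasureTheory Complex

noncomputable section

/-- estimate for the solution h of the second-order problem. -/
theorem second_order_estimate :
    ∃ C₂ > (0:ℝ), ∀ (R : ℝ), 0 < R → ∀ (k : ℤ), 1 ≤ |k| → ∀ (s : ℂ), 0 ≤ s.re →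
    ∀ (F G h : ℝ → ℂ), ContDiff ℝ 1 F → Continuous G → ContDiff ℝ 2 h →
    h 0 = 0 → h 1 = 0 →
    (∀ y ∈ Set.Icc (0:ℝ) 1,
      (1/(R:ℂ)) * iteratedDeriv 2 h y
        - (s + (k:ℂ)^2 / (R:ℂ) + Complex.I * (k:ℂ) * (y:ℂ)) * h y
        = deriv F y - Complex.I * (k:ℂ) * G y) →
    l2sq (deriv h) + (k:ℝ)^2 * l2sq h ≤ C₂ * R^2 * (l2sq F + l2sq G) := by
  refine ⟨1, one_pos, ?_⟩
  intro R hR k hk s hs F G h hF hG hh h0 h1 heq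
  have hdF : ∀ y, HasDerivAt F (deriv F y) y := fun y =>
    ((hF.differentiable (by norm_num)) y).hasDerivAt
  have hdh : ∀ y, HasDerivAt h (deriv h y) y := fun y =>
    ((hh.differentiable (by norm_num)) y).hasDerivAt
  have hh' : ContDiff ℝ 1 (deriv h) := by
    have h2 : ContDiff ℝ (1 + 1) h := by
      have : (1 + 1 : WithTop ℕ∞) = 2 := by norm_num
      rw [this]; exact hh
    exact (contDiff_succ_iff_deriv.1 h2).2.2
  have hddh : ∀ y, HasDerivAt (deriv h) (deriv (deriv h) y) y := fun y =>
    ((hh'.differentiable (by norm_num)) y).hasDerivAt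
  have hit : ∀ y, iteratedDeriv 2 h y = deriv (deriv h) y := fun y => by
    rw [iteratedDeriv_succ, iteratedDeriv_one]
  have cF := hF.continuous
  have ch := hh.continuous
  have ch' := hh'.continuous
  have cF' : Continuous (deriv F) := hF.continuous_deriv (by norm_num)
  have ch'' : Continuous (deriv (deriv h)) := hh'.continuous_deriv (by norm_num)
  set D : ℝ → ℂ := fun y => (starRingEnd ℂ) (deriv h y) * ((1/(R:ℂ)) * deriv h y - F y)
    + (starRingEnd ℂ) (h y) * ((1/(R:ℂ)) * deriv (deriv h) y - deriv F y) with hD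
  have cD : Continuous D := by
    have c1 : Continuous fun y => (starRingEnd ℂ) (deriv h y) := Complex.continuous_conj.comp ch'
    have c2 : Continuous fun y => (starRingEnd ℂ) (h y) := Complex.continuous_conj.comp ch
    exact (c1.mul ((continuous_const.mul ch').sub cF)).add
      (c2.mul ((continuous_const.mul ch'').sub cF'))
  have hder : ∀ y, HasDerivAt
      (fun y => (starRingEnd ℂ) (h y) * ((1/(R:ℂ)) * deriv h y - F y)) (D y) y := by
    intro y
    have e : HasDerivAt (fun y => (starRingEnd ℂ) (h y)) ((starRingEnd ℂ) (deriv h y)) y :=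
      (hdh y).star
    exact e.mul (((hddh y).const_mul _).sub (hdF y))
  have hzero : ∫ y in (0:ℝ)..1, (D y).re = 0 := by
    have := intervalIntegral.integral_eq_sub_of_hasDerivAt
      (f := fun y => ((starRingEnd ℂ) (h y) * ((1/(R:ℂ)) * deriv h y - F y)).re)
      (f' := fun y => (D y).re) (a := 0) (b := 1)
      (fun y _ => Complex.reCLM.hasFDerivAt.comp_hasDerivAt y (hder y))
      ((Complex.continuous_re.comp cD).intervalIntegrable _ _)
    rw [this]; simp [h0, h1]
  have hpt : ∀ y ∈ Set.Icc (0:ℝ) 1,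
      (1/(2*R)) * (‖deriv h y‖^2 + (k:ℝ)^2 * ‖h y‖^2) - (R/2) * (‖F y‖^2 + ‖G y‖^2)
        ≤ (D y).re := by
    intro y hy
    have e := heq y hy
    rw [hit] at e
    have e2 : (1/(R:ℂ)) * deriv (deriv h) y - deriv F y
        = ((s + ((k:ℝ)^2 / R : ℝ) + Complex.I * ((k:ℝ):ℂ) * (y:ℂ)) * h y
          - Complex.I * ((k:ℝ):ℂ) * G y) := by
      push_cast
      linear_combination e
    have eR : (1/(R:ℂ)) = ((1/R : ℝ) : ℂ) := by push_cast; rfl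
    simp only [hD]
    rw [e2, eR]
    generalize deriv h y = a
    generalize h y = b
    generalize F y = f
    generalize G y = g
    generalize (k:ℝ) = κ
    simp only [Complex.sq_norm, Complex.normSq_apply, Complex.add_re, Complex.mul_re, Complex.sub_re,
      Complex.sub_im, Complex.mul_im, Complex.add_im, Complex.conj_re, Complex.conj_im,
      Complex.ofReal_re, Complex.ofReal_im, Complex.I_re, Complex.I_im]
    have key : ∀ u v : ℝ, u * v ≤ (1/(2*R)) * u^2 + (R/2) * v^2 := by
      intro u v
      have : (1/(2*R)) * u^2 + (R/2) * v^2 - u * v = (1/(2*R)) * (u - R * v)^2 := by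
        field_simp; ring
      have : 0 ≤ (1/(2*R)) * (u - R * v)^2 := by positivity
      linarith
    have k1 := key a.re f.re
    have k2 := key a.im f.im
    have k3 := key (-κ * b.re) g.im
    have k4 := key (κ * b.im) g.re
    have k5 : 0 ≤ s.re * (b.re^2 + b.im^2) := by positivity
    have q1 : 1/(2*R) = (1/R)/2 := by field_simp
    have q2 : κ^2/R = (1/R) * κ^2 := by field_simp
    rw [q1] at k1 k2 k3 k4 ⊢
    rw [q2]
    generalize 1/R = r at k1 k2 k3 k4 ⊢
    nlinarith [k1, k2, k3, k4, k5]
  have i1 : IntervalIntegrable (fun y => ‖deriv h y‖^2) volume 0 1 :=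
    (ch'.norm.pow 2).intervalIntegrable _ _
  have i2 : IntervalIntegrable (fun y => ‖h y‖^2) volume 0 1 :=
    (ch.norm.pow 2).intervalIntegrable _ _
  have i3 : IntervalIntegrable (fun y => ‖F y‖^2) volume 0 1 :=
    (cF.norm.pow 2).intervalIntegrable _ _
  have i4 : IntervalIntegrable (fun y => ‖G y‖^2) volume 0 1 :=
    (hG.norm.pow 2).intervalIntegrable _ _
  have hm := intervalIntegral.integral_mono_on (zero_le_one)
    (((i1.add (i2.const_mul _)).const_mul _).sub ((i3.add i4).const_mul _))
    ((Complex.continuous_re.comp cD).intervalIntegrable 0 1) hpt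
  have hm2 : (1/(2*R)) * (l2sq (deriv h) + (k:ℝ)^2 * l2sq h)
      - (R/2) * (l2sq F + l2sq G) ≤ 0 := by
    rw [← hzero]
    refine le_trans (le_of_eq ?_) hm
    rw [intervalIntegral.integral_sub ((i1.add (i2.const_mul _)).const_mul _)
      ((i3.add i4).const_mul _), intervalIntegral.integral_const_mul,
      intervalIntegral.integral_const_mul, intervalIntegral.integral_add i1 (i2.const_mul _),
      intervalIntegral.integral_add i3 i4, intervalIntegral.integral_const_mul]
    rfl
  generalize l2sq (deriv h) + (k:ℝ)^2 * l2sq h = X at *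
  generalize l2sq F + l2sq G = Y at *
  have e : X = 2 * R * (1/(2*R) * X - R/2*Y) + R^2 * Y := by field_simp; ring
  have : 2 * R * (1/(2*R) * X - R/2*Y) ≤ 0 :=
    mul_nonpos_of_nonneg_of_nonpos (by positivity) hm2
  linarith

end
end

section
/- There exists a constant C > 0, independent of R, k, s, F and G, such that k²·‖g''‖² + k⁴·‖g'‖² + k⁶·‖g‖² ≤ C·R²·(‖F‖² + ‖G‖²). -/
open MeasureTheory Complex

noncomputable section

/-- Pointwise algebraic inequality. -/
lemma pointwise_bound (R k y : ℝ) (hR : 0 < R) (s F F1 G h h1 h2 g g1 g2 : ℂ) (hs : 0 ≤ s.re)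
    (e1 : (1/(R:ℂ)) * h2 - (s + (k:ℂ)^2 / (R:ℂ) + Complex.I * (k:ℂ) * (y:ℂ)) * h
        = F1 - Complex.I * (k:ℂ) * G)
    (e2 : g2 - (k:ℂ)^2 * g = h) :
    k^2 * ‖g2‖^2 + k^4 * ‖g1‖^2 + k^6 * ‖g‖^2 ≤ R^2 * (‖F‖^2 + ‖G‖^2)
      + (2 * ((inner ℝ h h2 + inner ℝ h1 h1) - R * (inner ℝ h F1 + inner ℝ h1 F))
        + 2 * k^4 * (inner ℝ g g2 + inner ℝ g1 g1)) := by
  have hRc : (R:ℂ) ≠ 0 := by exact_mod_cast hR.ne'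
  have e3 : h2 = (R * s + (k:ℂ)^2 + Complex.I * R * k * y) * h + R * F1 - Complex.I * R * k * G := by
    field_simp at e1
    linear_combination e1
  have e4 : g2 = (k:ℂ)^2 * g + h := by linear_combination e2
  subst e3
  subst e4
  have key : 0 ≤ 2 * R * s.re * (h.re^2 + h.im^2) := by positivity
  simp only [Complex.inner, ← Complex.normSq_eq_norm_sq, Complex.normSq_apply]
  simp [pow_two]
  nlinarith [sq_nonneg (h1.re - R * F.re), sq_nonneg (h1.im - R * F.im), sq_nonneg h1.re,
    sq_nonneg h1.im, sq_nonneg (k * h.re + R * G.im), sq_nonneg (k * h.im - R * G.re), key,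
    sq_nonneg (k^2 * g1.re), sq_nonneg (k^2 * g1.im)]

/-- combined estimate for g. -/
theorem combined_estimate :
    ∃ C > (0:ℝ), ∀ (R : ℝ), 0 < R → ∀ (k : ℤ), 1 ≤ |k| → ∀ (s : ℂ), 0 ≤ s.re →
    ∀ (F G h g : ℝ → ℂ), ContDiff ℝ 1 F → Continuous G →
    ContDiff ℝ 2 h → h 0 = 0 → h 1 = 0 →
    (∀ y ∈ Set.Icc (0:ℝ) 1,
      (1/(R:ℂ)) * iteratedDeriv 2 h y
        - (s + (k:ℂ)^2 / (R:ℂ) + Complex.I * (k:ℂ) * (y:ℂ)) * h y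
        = deriv F y - Complex.I * (k:ℂ) * G y) →
    ContDiff ℝ 2 g → g 0 = 0 → g 1 = 0 →
    (∀ y ∈ Set.Icc (0:ℝ) 1, iteratedDeriv 2 g y - (k:ℂ)^2 * g y = h y) →
    (k:ℝ)^2 * l2sq (iteratedDeriv 2 g) + (k:ℝ)^4 * l2sq (deriv g)
      + (k:ℝ)^6 * l2sq g ≤ C * R^2 * (l2sq F + l2sq G) := by
  refine ⟨1, one_pos, ?_⟩
  intro R hR k _ s hs F G h g hF hG hh h0 h1 he hg g0 g1 hge
  have aux : ∀ f : ℝ → ℂ, ContDiff ℝ 2 f → (∀ y, HasDerivAt f (deriv f y) y) ∧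
      (∀ y, HasDerivAt (deriv f) (iteratedDeriv 2 f y) y) ∧ Continuous f ∧ Continuous (deriv f) ∧
      Continuous (iteratedDeriv 2 f) := by
    intro f hf
    have hd : ContDiff ℝ 1 (deriv f) := by
      have := (contDiff_succ_iff_deriv (n := 1) (𝕜 := ℝ) (f := f)).1 (by simpa [one_add_one_eq_two] using hf)
      exact this.2.2
    refine ⟨fun y => (hf.differentiable (by norm_num) y).hasDerivAt, fun y => ?_, hf.continuous,
      hd.continuous, hf.continuous_iteratedDeriv 2 (by norm_num)⟩
    rw [iteratedDeriv_succ, iteratedDeriv_one]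
    exact (hd.differentiable (by norm_num) y).hasDerivAt
  obtain ⟨hd1, hd2, hc0, hc1, hc2⟩ := aux h hh
  obtain ⟨gd1, gd2, gc0, gc1, gc2⟩ := aux g hg
  have Fd : ∀ y, HasDerivAt F (deriv F y) y := fun y => (hF.differentiable (by norm_num) y).hasDerivAt
  have Fc := hF.continuous
  have Fc1 : Continuous (deriv F) := hF.continuous_deriv (by norm_num)
  have hT := fun y => (((((hd1 y).inner ℝ (hd2 y)).sub
    (((hd1 y).inner ℝ (Fd y)).const_mul R)).const_mul 2).add
    (((gd1 y).inner ℝ (gd2 y)).const_mul (2 * (k:ℝ)^4)))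
  have hTint := intervalIntegral.integral_eq_sub_of_hasDerivAt (a := 0) (b := 1)
    (fun y _ => hT y) (Continuous.intervalIntegrable (by fun_prop) _ _)
  simp only [Pi.add_apply, Pi.sub_apply, h0, h1, g0, g1, inner_zero_left, mul_zero, sub_zero, add_zero] at hTint
  have hmono := intervalIntegral.integral_mono_on (μ := volume) (a := 0) (b := 1) zero_le_one
    (Continuous.intervalIntegrable (by fun_prop) _ _)
    (Continuous.intervalIntegrable (by fun_prop) _ _)
    (fun y hy => pointwise_bound R k y hR s (F y) (deriv F y) (G y) (h y) (deriv h y)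
      (iteratedDeriv 2 h y) (g y) (deriv g y) (iteratedDeriv 2 g y) hs
      (by simpa using he y hy) (by simpa using hge y hy))
  rw [intervalIntegral.integral_add (Continuous.intervalIntegrable (by fun_prop) _ _)
    (Continuous.intervalIntegrable (by fun_prop) _ _),
    intervalIntegral.integral_add (Continuous.intervalIntegrable (by fun_prop) _ _)
    (Continuous.intervalIntegrable (by fun_prop) _ _),
    intervalIntegral.integral_add (Continuous.intervalIntegrable (by fun_prop) _ _)
    (Continuous.intervalIntegrable (by fun_prop) _ _), hTint] at hmono
  simp only [intervalIntegral.integral_const_mul] at hmono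
  rw [intervalIntegral.integral_add (Continuous.intervalIntegrable (by fun_prop) _ _)
    (Continuous.intervalIntegrable (by fun_prop) _ _)] at hmono
  unfold l2sq
  linarith

end
end

section
/- There exists a constant C > 0, independent of R, k, s, F and G, such that sup_{y ∈ [0,1]} |g'(y)|² ≤ C·R²·(‖F‖² + ‖G‖²); in particular the boundary values satisfy |g'(0)|² ≤ C·R²·(‖F‖² + ‖G‖²) and |g'(1)|² ≤ C·R²·(‖F‖² + ‖G‖²). -/
open MeasureTheory Complex

noncomputable section

lemma int_nonneg_of_deriv (P p : ℝ → ℝ) (hP : ∀ y, HasDerivAt P (p y) y) (hp : Continuous p)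
    (h0 : P 0 = 0) (h1 : P 1 = 0) : ∫ y in (0:ℝ)..1, p y = 0 := by
  rw [intervalIntegral.integral_eq_sub_of_hasDerivAt (fun y _ => hP y) (hp.intervalIntegrable _ _)]
  simp [h0, h1]

lemma sq_int_le (u : ℝ → ℝ) (hu : Continuous u) :
    (∫ y in (0:ℝ)..1, u y) ^ 2 ≤ ∫ y in (0:ℝ)..1, u y ^ 2 := by
  set M := ∫ y in (0:ℝ)..1, u y with hM
  have h : ∫ y in (0:ℝ)..1, (2 * M * u y - M ^ 2) ≤ ∫ y in (0:ℝ)..1, u y ^ 2 := by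
    apply intervalIntegral.integral_mono_on zero_le_one
    · exact Continuous.intervalIntegrable (by fun_prop) _ _
    · exact Continuous.intervalIntegrable (by fun_prop) _ _
    · intro y _
      nlinarith [sq_nonneg (u y - M)]
  rw [intervalIntegral.integral_sub (Continuous.intervalIntegrable (by fun_prop) _ _)
    (Continuous.intervalIntegrable (by fun_prop) _ _), intervalIntegral.integral_const_mul,
    ← hM] at h
  simp at h
  nlinarith

lemma pt1 (R : ℝ) (hR : 0 < R) (k : ℝ) (y : ℝ) (s h h1 h2 F F1 G : ℂ) (hs : 0 ≤ s.re)
    (e : (1/(R:ℂ)) * h2 - (s + (k:ℂ)^2 / (R:ℂ) + Complex.I * (k:ℂ) * (y:ℂ)) * h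
        = F1 - Complex.I * (k:ℂ) * G) :
    ‖h1‖ ^ 2 + k ^ 2 * ‖h‖ ^ 2 ≤ R ^ 2 * (‖F‖ ^ 2 + ‖G‖ ^ 2) +
      2 * R * (inner ℝ h ((1/R : ℝ) • h2 - F1) + inner ℝ h1 ((1/R : ℝ) • h1 - F)) := by
  have e2 : (1/R : ℝ) • h2 - F1 = (s + ((k ^ 2 / R : ℝ) : ℂ) + Complex.I * (k:ℂ) * (y:ℂ)) * h
      - Complex.I * (k:ℂ) * G := by
    rw [Complex.real_smul]; push_cast; linear_combination e
  rw [e2]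
  simp only [Complex.inner, ← Complex.normSq_eq_norm_sq, Complex.normSq_apply]
  simp
  have hRR : R * R⁻¹ = 1 := mul_inv_cancel₀ hR.ne'
  have hd : k ^ 2 / R = k ^ 2 * R⁻¹ := div_eq_mul_inv _ _
  have hp : 0 ≤ 2 * R * s.re * (h.re ^ 2 + h.im ^ 2) := by positivity
  have key : ∀ X : ℝ, X * (R * R⁻¹) = X := by intro X; rw [hRR, mul_one]
  rw [← Complex.ofReal_pow, Complex.ofReal_re, Complex.ofReal_im, hd, zero_div, add_zero]
  have k1 := key (2 * k ^ 2 * (h.re ^ 2 + h.im ^ 2))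
  have k2 := key (2 * (h1.re ^ 2 + h1.im ^ 2))
  nlinarith [sq_nonneg (h1.re - R * F.re), sq_nonneg (h1.im - R * F.im),
    sq_nonneg (k * h.re + R * G.im), sq_nonneg (k * h.im - R * G.re)]

lemma pt2 (k : ℝ) (g g1 g2 h : ℂ) (e : g2 - (k:ℂ)^2 * g = h) :
    ‖g2‖ ^ 2 ≤ ‖h‖ ^ 2 + 2 * k ^ 2 * (inner ℝ g g2 + inner ℝ g1 g1) := by
  rw [← e, ← Complex.ofReal_pow]
  simp only [Complex.inner, ← Complex.normSq_eq_norm_sq, Complex.normSq_apply]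
  simp only [Complex.sub_re, Complex.sub_im, Complex.mul_re, Complex.mul_im, Complex.ofReal_re,
    Complex.ofReal_im, Complex.conj_re, Complex.conj_im]
  nlinarith [sq_nonneg (k ^ 2 * g.re), sq_nonneg (k ^ 2 * g.im), sq_nonneg (k * g1.re),
    sq_nonneg (k * g1.im)]

lemma c2 {f : ℝ → ℂ} (hf : ContDiff ℝ 2 f) : (∀ y, HasDerivAt f (deriv f y) y) ∧
    (∀ y, HasDerivAt (deriv f) (iteratedDeriv 2 f y) y) ∧ Continuous f ∧ Continuous (deriv f) ∧
    Continuous (iteratedDeriv 2 f) := by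
  have h1 : ContDiff ℝ 1 (deriv f) := by
    have : ContDiff ℝ (1 + 1) f := by norm_num; exact hf
    exact (contDiff_succ_iff_deriv.1 this).2.2
  have e : iteratedDeriv 2 f = deriv (deriv f) := by
    rw [iteratedDeriv_succ, iteratedDeriv_one]
  refine ⟨fun y => (hf.differentiable (by norm_num) y).hasDerivAt, fun y => ?_, hf.continuous,
    h1.continuous, ?_⟩
  · rw [e]; exact (h1.differentiable (by norm_num) y).hasDerivAt
  · rw [e]; exact h1.continuous_deriv (by norm_num)

lemma main_bound (R : ℝ) (hR : 0 < R) (k : ℤ) (hk : 1 ≤ |k|) (s : ℂ) (hs : 0 ≤ s.re)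
    (F G h g : ℝ → ℂ) (hF : ContDiff ℝ 1 F) (hG : Continuous G)
    (hh : ContDiff ℝ 2 h) (h0 : h 0 = 0) (h1 : h 1 = 0)
    (eh : ∀ y ∈ Set.Icc (0:ℝ) 1,
      (1/(R:ℂ)) * iteratedDeriv 2 h y
        - (s + (k:ℂ)^2 / (R:ℂ) + Complex.I * (k:ℂ) * (y:ℂ)) * h y
        = deriv F y - Complex.I * (k:ℂ) * G y)
    (hg : ContDiff ℝ 3 g) (g0 : g 0 = 0) (g1 : g 1 = 0)
    (eg : ∀ y ∈ Set.Icc (0:ℝ) 1, iteratedDeriv 2 g y - (k:ℂ)^2 * g y = h y) :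
    ∀ y ∈ Set.Icc (0:ℝ) 1, ‖deriv g y‖^2 ≤ 1 * R^2 * (l2sq F + l2sq G) := by
  obtain ⟨hd1, hd2, hc, hc1, hc2⟩ := c2 hh
  obtain ⟨gd1, gd2, gc, gc1, gc2⟩ := c2 (hg.of_le (by norm_num))
  have Fc := hF.continuous
  have Fc1 : Continuous (deriv F) := hF.continuous_deriv (by norm_num)
  have Fd : ∀ y, HasDerivAt F (deriv F y) y :=
    fun y => (hF.differentiable (by norm_num) y).hasDerivAt
  have hk2 : (1:ℝ) ≤ (k:ℝ) ^ 2 := by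
    have : (1:ℤ) ≤ k ^ 2 := by rw [← sq_abs]; nlinarith
    exact_mod_cast this
  -- step 1
  have A : ∫ y in (0:ℝ)..1, ‖h y‖ ^ 2 ≤ R ^ 2 * (l2sq F + l2sq G) := by
    have z := int_nonneg_of_deriv (fun y => inner ℝ (h y) ((1/R : ℝ) • deriv h y - F y))
      (fun y => inner ℝ (h y) ((1/R : ℝ) • iteratedDeriv 2 h y - deriv F y)
        + inner ℝ (deriv h y) ((1/R : ℝ) • deriv h y - F y))
      (fun y => (hd1 y).inner ℝ (((hd2 y).const_smul (1/R : ℝ)).sub (Fd y)))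
      (by fun_prop) (by simp [h0]) (by simp [h1])
    have m : ∫ y in (0:ℝ)..1, ‖h y‖ ^ 2 ≤ ∫ y in (0:ℝ)..1, (R ^ 2 * (‖F y‖ ^ 2 + ‖G y‖ ^ 2) +
        2 * R * (inner ℝ (h y) ((1/R : ℝ) • iteratedDeriv 2 h y - deriv F y)
        + inner ℝ (deriv h y) ((1/R : ℝ) • deriv h y - F y))) := by
      apply intervalIntegral.integral_mono_on zero_le_one
      · exact Continuous.intervalIntegrable (by fun_prop) _ _
      · exact Continuous.intervalIntegrable (by fun_prop) _ _
      · intro y hy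
        have := pt1 R hR k y s (h y) (deriv h y) (iteratedDeriv 2 h y) (F y) (deriv F y) (G y) hs
          (by have := eh y hy; push_cast; exact this)
        nlinarith [sq_nonneg ‖h y‖, sq_nonneg ‖deriv h y‖]
    rw [intervalIntegral.integral_add (Continuous.intervalIntegrable (by fun_prop) _ _)
      (Continuous.intervalIntegrable (by fun_prop) _ _), intervalIntegral.integral_const_mul,
      intervalIntegral.integral_const_mul, z,
      intervalIntegral.integral_add (Continuous.intervalIntegrable (by fun_prop) _ _)
      (Continuous.intervalIntegrable (by fun_prop) _ _)] at m
    simpa [l2sq] using m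
  have B : ∫ y in (0:ℝ)..1, ‖iteratedDeriv 2 g y‖ ^ 2 ≤ ∫ y in (0:ℝ)..1, ‖h y‖ ^ 2 := by
    have z := int_nonneg_of_deriv (fun y => inner ℝ (g y) (deriv g y))
      (fun y => inner ℝ (g y) (iteratedDeriv 2 g y) + inner ℝ (deriv g y) (deriv g y))
      (fun y => (gd1 y).inner ℝ (gd2 y))
      (by fun_prop) (by simp [g0]) (by simp [g1])
    have m : ∫ y in (0:ℝ)..1, ‖iteratedDeriv 2 g y‖ ^ 2 ≤ ∫ y in (0:ℝ)..1, (‖h y‖ ^ 2 +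
        2 * (k:ℝ) ^ 2 * (inner ℝ (g y) (iteratedDeriv 2 g y)
          + inner ℝ (deriv g y) (deriv g y))) := by
      apply intervalIntegral.integral_mono_on zero_le_one
      · exact Continuous.intervalIntegrable (by fun_prop) _ _
      · exact Continuous.intervalIntegrable (by fun_prop) _ _
      · intro y hy
        exact pt2 k (g y) (deriv g y) (iteratedDeriv 2 g y) (h y)
          (by have := eg y hy; push_cast; exact this)
    rw [intervalIntegral.integral_add (Continuous.intervalIntegrable (by fun_prop) _ _)
      (Continuous.intervalIntegrable (by fun_prop) _ _), intervalIntegral.integral_const_mul,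
      z] at m
    simpa using m
  have D := sq_int_le (fun y => ‖iteratedDeriv 2 g y‖) (by fun_prop)
  intro y hy
  have key : ∀ x ∈ Set.Icc (0:ℝ) 1, ‖deriv g y - deriv g x‖ ≤
      ∫ y in (0:ℝ)..1, ‖iteratedDeriv 2 g y‖ := by
    intro x hx
    rw [← intervalIntegral.integral_eq_sub_of_hasDerivAt (fun y _ => gd2 y)
      (gc2.intervalIntegrable _ _)]
    refine (intervalIntegral.norm_integral_le_integral_norm_uIoc).trans ?_
    rw [intervalIntegral.integral_of_le zero_le_one]
    apply setIntegral_mono_set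
    · exact (gc2.norm.intervalIntegrable 0 1).1
    · exact Filter.Eventually.of_forall fun _ => norm_nonneg _
    · apply HasSubset.Subset.eventuallyLE
      intro t ht
      rw [Set.mem_uIoc] at ht
      rcases ht with ht | ht
      · exact ⟨hx.1.trans_lt ht.1, ht.2.trans hy.2⟩
      · exact ⟨hy.1.trans_lt ht.1, ht.2.trans hx.2⟩
  have E : ‖deriv g y‖ ≤ ∫ y in (0:ℝ)..1, ‖iteratedDeriv 2 g y‖ := by
    have e : ∫ x in (0:ℝ)..1, (deriv g y - deriv g x) = deriv g y := by
      rw [intervalIntegral.integral_sub (Continuous.intervalIntegrable (by fun_prop) _ _)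
        (gc1.intervalIntegrable _ _), intervalIntegral.integral_eq_sub_of_hasDerivAt
        (fun y _ => gd1 y) (gc1.intervalIntegrable _ _)]
      simp [g0, g1]
    have := intervalIntegral.norm_integral_le_of_norm_le_const (a := (0:ℝ)) (b := 1)
      (f := fun x => deriv g y - deriv g x) (C := ∫ y in (0:ℝ)..1, ‖iteratedDeriv 2 g y‖)
      (fun x hx => key x (by
        rw [Set.uIoc_of_le zero_le_one] at hx; exact ⟨hx.1.le, hx.2⟩))
    rw [e] at this
    simpa using this
  calc ‖deriv g y‖ ^ 2 ≤ (∫ y in (0:ℝ)..1, ‖iteratedDeriv 2 g y‖) ^ 2 := by gcongr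
    _ ≤ _ := by rw [one_mul]; exact D.trans (B.trans A)

/-- pointwise bound for g' and its boundary values. -/
theorem boundary_derivative_estimate :
    ∃ C > (0:ℝ), ∀ (R : ℝ), 0 < R → ∀ (k : ℤ), 1 ≤ |k| → ∀ (s : ℂ), 0 ≤ s.re →
    ∀ (F G h g : ℝ → ℂ), ContDiff ℝ 1 F → Continuous G →
    ContDiff ℝ 2 h → h 0 = 0 → h 1 = 0 →
    (∀ y ∈ Set.Icc (0:ℝ) 1,
      (1/(R:ℂ)) * iteratedDeriv 2 h y
        - (s + (k:ℂ)^2 / (R:ℂ) + Complex.I * (k:ℂ) * (y:ℂ)) * h y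
        = deriv F y - Complex.I * (k:ℂ) * G y) →
    ContDiff ℝ 3 g → g 0 = 0 → g 1 = 0 →
    (∀ y ∈ Set.Icc (0:ℝ) 1, iteratedDeriv 2 g y - (k:ℂ)^2 * g y = h y) →
    (∀ y ∈ Set.Icc (0:ℝ) 1, ‖deriv g y‖^2 ≤ C * R^2 * (l2sq F + l2sq G))
      ∧ ‖deriv g 0‖^2 ≤ C * R^2 * (l2sq F + l2sq G)
      ∧ ‖deriv g 1‖^2 ≤ C * R^2 * (l2sq F + l2sq G) := by
  refine ⟨1, one_pos, ?_⟩
  intro R hR k hk s hs F G h g hF hG hh h0 h1 eh hg g0 g1 eg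
  have m := main_bound R hR k hk s hs F G h g hF hG hh h0 h1 eh hg g0 g1 eg
  exact ⟨m, m 0 (by simp), m 1 (by simp)⟩

end
end

section
/- The solution ψ of the zero Fourier mode problem satisfies ‖ψ'‖² ≤ (R²/π⁴)·‖F‖² and ‖ψ‖² ≤ (R²/π⁶)·‖F‖². -/
open MeasureTheory Complex

noncomputable section

/-- Wirtinger inequality with a constant below pi. -/
lemma wirtinger_aux (g g' : ℝ → ℂ) (hg : ∀ y, HasDerivAt g (g' y) y) (hc : Continuous g')
    (h0 : g 0 = 0) (h1 : g 1 = 0) (a : ℝ) (ha0 : 0 < a) (ha : a < Real.pi) :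
    a ^ 2 * ∫ y in (0:ℝ)..1, ‖g y‖ ^ 2 ≤ ∫ y in (0:ℝ)..1, ‖g' y‖ ^ 2 := by
  have hgc : Continuous g := continuous_iff_continuousAt.2 fun y => (hg y).continuousAt
  have hcos : ∀ y ∈ Set.uIcc (0:ℝ) 1, Real.cos (a * (y - 1 / 2)) ≠ 0 := by
    intro y hy
    rw [Set.uIcc_of_le zero_le_one] at hy
    apply ne_of_gt
    apply Real.cos_pos_of_mem_Ioo
    constructor <;> nlinarith [hy.1, hy.2]
  set φ : ℝ → ℝ := fun y => a * Real.tan (a * (y - 1 / 2)) with hφ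
  have hφd : ∀ y ∈ Set.uIcc (0:ℝ) 1, HasDerivAt φ (a ^ 2 + φ y ^ 2) y := by
    intro y hy
    have h2 : HasDerivAt (fun y : ℝ => a * (y - 1 / 2)) (a * 1) y :=
      ((hasDerivAt_id y).sub_const _).const_mul a
    have h3 := ((Real.hasDerivAt_tan (hcos y hy)).comp y h2).const_mul a
    refine h3.congr_deriv ?_
    have := Real.sin_sq_add_cos_sq (a * (y - 1 / 2))
    have hne := hcos y hy
    simp only [hφ, Real.tan_eq_sin_div_cos]
    generalize Real.cos (a * (y - 1 / 2)) = c at *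
    generalize Real.sin (a * (y - 1 / 2)) = s at *
    field_simp
    linarith
  have hφc : ContinuousOn φ (Set.uIcc (0:ℝ) 1) := fun y hy => (hφd y hy).continuousAt.continuousWithinAt
  have hD : ∀ y ∈ Set.uIcc (0:ℝ) 1, HasDerivAt (fun y => φ y * ‖g y‖ ^ 2)
      ((a ^ 2 + φ y ^ 2) * ‖g y‖ ^ 2 + φ y * (2 * inner ℝ (g y) (g' y))) y := by
    intro y hy
    exact (hφd y hy).mul (hg y).norm_sq
  have hDc : ContinuousOn (fun y => (a ^ 2 + φ y ^ 2) * ‖g y‖ ^ 2 + φ y * (2 * inner ℝ (g y) (g' y)))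
      (Set.uIcc (0:ℝ) 1) := by
    have h1 : Continuous fun y => inner ℝ (g y) (g' y) := hgc.inner hc
    have h2 : Continuous fun y => ‖g y‖ ^ 2 := by fun_prop
    exact ((continuousOn_const.add (hφc.pow 2)).mul h2.continuousOn).add
      (hφc.mul (continuousOn_const.mul h1.continuousOn))
  have hI := intervalIntegral.integral_eq_sub_of_hasDerivAt hD hDc.intervalIntegrable
  simp only [h0, h1, norm_zero] at hI
  have i1 : IntervalIntegrable (fun y => a ^ 2 * ‖g y‖ ^ 2) volume 0 1 :=
    Continuous.intervalIntegrable (by fun_prop) _ _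
  have i2 : IntervalIntegrable (fun y => ‖g' y‖ ^ 2) volume 0 1 :=
    Continuous.intervalIntegrable (by fun_prop) _ _
  have key := intervalIntegral.integral_mono_on zero_le_one i1 (i2.add hDc.intervalIntegrable) (by
    intro y hy
    have e : ‖g' y + φ y • g y‖ ^ 2
        = ‖g' y‖ ^ 2 + 2 * (φ y * inner ℝ (g y) (g' y)) + φ y ^ 2 * ‖g y‖ ^ 2 := by
      rw [norm_add_sq_real, inner_smul_right, real_inner_comm, norm_smul, mul_pow,
        Real.norm_eq_abs, sq_abs]
    have := sq_nonneg ‖g' y + φ y • g y‖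
    linarith)
  rw [intervalIntegral.integral_const_mul] at key
  have e2 := intervalIntegral.integral_add i2 hDc.intervalIntegrable
  rw [e2, hI] at key
  simpa using key

lemma wirtinger (g g' : ℝ → ℂ) (hg : ∀ y, HasDerivAt g (g' y) y) (hc : Continuous g')
    (h0 : g 0 = 0) (h1 : g 1 = 0) :
    Real.pi ^ 2 * l2sq g ≤ l2sq g' := by
  unfold l2sq
  have ht : Filter.Tendsto (fun a : ℝ => a ^ 2 * ∫ y in (0:ℝ)..1, ‖g y‖ ^ 2)
      (nhdsWithin Real.pi (Set.Iio Real.pi))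
      (nhds (Real.pi ^ 2 * ∫ y in (0:ℝ)..1, ‖g y‖ ^ 2)) :=
    ((continuous_id.pow 2).mul continuous_const).continuousAt.tendsto.mono_left nhdsWithin_le_nhds
  refine le_of_tendsto ht ?_
  filter_upwards [Ioo_mem_nhdsLT Real.pi_pos] with a ha
  exact wirtinger_aux g g' hg hc h0 h1 a ha.1 ha.2

/-- estimates for the zero Fourier mode. -/
theorem zero_mode_estimate
    (R : ℝ) (hR : 0 < R) (ξ : ℝ)
    (F : ℝ → ℂ) (hF : ContDiff ℝ 1 F)
    (ψ : ℝ → ℂ) (hψ : ContDiff ℝ 4 ψ)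
    (hb0 : ψ 0 = 0) (hb1 : ψ 1 = 0) (hb0' : deriv ψ 0 = 0) (hb1' : deriv ψ 1 = 0)
    (heq : ∀ y ∈ Set.Icc (0:ℝ) 1,
      (1/(R:ℂ)) * iteratedDeriv 4 ψ y - Complex.I * (ξ:ℂ) * iteratedDeriv 2 ψ y
        = deriv F y)
 :
    l2sq (deriv ψ) ≤ (R^2 / Real.pi^4) * l2sq F
      ∧ l2sq ψ ≤ (R^2 / Real.pi^6) * l2sq F := by
  have hp := Real.pi_pos
  have hd : ∀ n : ℕ, n < 4 → ∀ y, HasDerivAt (iteratedDeriv n ψ) (iteratedDeriv (n + 1) ψ y) y := by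
    intro n hn y
    rw [iteratedDeriv_succ]
    exact ((hψ.differentiable_iteratedDeriv n (by exact_mod_cast hn)) y).hasDerivAt
  have hcd : ∀ n : ℕ, n ≤ 4 → Continuous (iteratedDeriv n ψ) := by
    intro n hn
    exact hψ.continuous_iteratedDeriv n (by exact_mod_cast hn)
  have d0 : ∀ y, HasDerivAt ψ (deriv ψ y) y := by
    simpa [iteratedDeriv_zero, iteratedDeriv_one] using hd 0 (by norm_num)
  have d1 : ∀ y, HasDerivAt (deriv ψ) (iteratedDeriv 2 ψ y) y := by
    simpa [iteratedDeriv_one] using hd 1 (by norm_num)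
  have d2 := hd 2 (by norm_num)
  have d3 := hd 3 (by norm_num)
  norm_num at d2 d3
  have c1 : Continuous (deriv ψ) := by simpa [iteratedDeriv_one] using hcd 1 (by norm_num)
  have c2 := hcd 2 (by norm_num)
  have dF : ∀ y, HasDerivAt F (deriv F y) y := fun y =>
    ((hF.differentiable (by norm_num)) y).hasDerivAt
  have cF : Continuous F := hF.continuous
  have W0 := wirtinger ψ (deriv ψ) d0 c1 hb0 hb1
  have W1 := wirtinger (deriv ψ) (iteratedDeriv 2 ψ) d1 c2 hb0' hb1'
  have hE : ∀ y ∈ Set.uIcc (0:ℝ) 1, HasDerivAt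
      (fun y => inner ℝ (ψ y) ((1/(R:ℂ)) * iteratedDeriv 3 ψ y - Complex.I * (ξ:ℂ) * deriv ψ y - F y)
        - inner ℝ (deriv ψ y) ((1/(R:ℂ)) * iteratedDeriv 2 ψ y))
      (-(inner ℝ (deriv ψ y) (F y)) - (1 / R) * ‖iteratedDeriv 2 ψ y‖ ^ 2) y := by
    intro y hy
    rw [Set.uIcc_of_le zero_le_one] at hy
    have hA := (((d3 y).const_mul (1/(R:ℂ))).sub ((d1 y).const_mul (Complex.I * (ξ:ℂ)))).sub (dF y)
    have hB := ((d0 y).inner ℝ hA).sub ((d1 y).inner ℝ ((d2 y).const_mul (1/(R:ℂ))))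
    refine hB.congr_deriv ?_
    rw [heq y hy, sub_self, inner_zero_right, ← Complex.ofReal_one, ← Complex.ofReal_div]
    simp only [Complex.inner, ← Complex.normSq_eq_norm_sq, Complex.normSq_apply]
    simp
    ring
  have hEc : Continuous (fun y => -(inner ℝ (deriv ψ y) (F y)) - (1 / R) * ‖iteratedDeriv 2 ψ y‖ ^ 2) :=
    (c1.inner cF).neg.sub (by fun_prop)
  have hI := intervalIntegral.integral_eq_sub_of_hasDerivAt hE (hEc.intervalIntegrable _ _)
  simp only [hb0, hb1, hb0', hb1', inner_zero_left, sub_zero] at hI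
  have i1 : IntervalIntegrable (fun y => -inner ℝ (deriv ψ y) (F y)) volume 0 1 :=
    (c1.inner cF).neg.intervalIntegrable _ _
  have i2 : IntervalIntegrable (fun y => (1 / R) * ‖iteratedDeriv 2 ψ y‖ ^ 2) volume 0 1 :=
    Continuous.intervalIntegrable (by fun_prop) _ _
  rw [intervalIntegral.integral_sub i1 i2, intervalIntegral.integral_const_mul] at hI
  set c : ℝ := Real.pi ^ 2 / R with hcdef
  have hc : 0 < c := by positivity
  have i3 : IntervalIntegrable (fun y => c / 2 * ‖deriv ψ y‖ ^ 2) volume 0 1 :=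
    Continuous.intervalIntegrable (by fun_prop) _ _
  have i4 : IntervalIntegrable (fun y => 1 / (2 * c) * ‖F y‖ ^ 2) volume 0 1 :=
    Continuous.intervalIntegrable (by fun_prop) _ _
  have key := intervalIntegral.integral_mono_on zero_le_one i1 (i3.add i4) (by
    intro y hy
    have e : ‖c • deriv ψ y + F y‖ ^ 2
        = c ^ 2 * ‖deriv ψ y‖ ^ 2 + 2 * (c * inner ℝ (deriv ψ y) (F y)) + ‖F y‖ ^ 2 := by
      rw [norm_add_sq_real, real_inner_smul_left, norm_smul, mul_pow, Real.norm_eq_abs, sq_abs]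
    have h := sq_nonneg ‖c • deriv ψ y + F y‖
    rw [e] at h
    have h2 : 0 ≤ 1 / (2 * c) * (c ^ 2 * ‖deriv ψ y‖ ^ 2 + 2 * (c * inner ℝ (deriv ψ y) (F y)) + ‖F y‖ ^ 2) := by
      positivity
    have e3 : 1 / (2 * c) * (c ^ 2 * ‖deriv ψ y‖ ^ 2 + 2 * (c * inner ℝ (deriv ψ y) (F y)) + ‖F y‖ ^ 2)
        = c / 2 * ‖deriv ψ y‖ ^ 2 + inner ℝ (deriv ψ y) (F y) + 1 / (2 * c) * ‖F y‖ ^ 2 := by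
      field_simp
    linarith)
  rw [intervalIntegral.integral_add i3 i4, intervalIntegral.integral_const_mul,
    intervalIntegral.integral_const_mul] at key
  change _ ≤ c / 2 * l2sq (deriv ψ) + 1 / (2 * c) * l2sq F at key
  change _ - 1 / R * l2sq (iteratedDeriv 2 ψ) = 0 at hI
  have W1' : c * l2sq (deriv ψ) ≤ 1 / R * l2sq (iteratedDeriv 2 ψ) := by
    have := mul_le_mul_of_nonneg_left W1 (by positivity : 0 ≤ 1 / R)
    calc _ = 1 / R * (Real.pi ^ 2 * l2sq (deriv ψ)) := by rw [hcdef]; ring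
      _ ≤ _ := this
  have h5 : c / 2 * l2sq (deriv ψ) ≤ 1 / (2 * c) * l2sq F := by linarith
  have h6 : l2sq (deriv ψ) ≤ (R^2 / Real.pi^4) * l2sq F := by
    have := mul_le_mul_of_nonneg_left h5 (by positivity : 0 ≤ 2 / c)
    calc _ = 2 / c * (c / 2 * l2sq (deriv ψ)) := by field_simp
      _ ≤ _ := this
      _ = _ := by rw [hcdef]; field_simp
  refine ⟨h6, ?_⟩
  have h7 := mul_le_mul_of_nonneg_left (W0.trans h6) (by positivity : 0 ≤ 1 / Real.pi ^ 2)
  calc _ = 1 / Real.pi ^ 2 * (Real.pi ^ 2 * l2sq ψ) := by field_simp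
    _ ≤ _ := h7
    _ = _ := by field_simp

end
end
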